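/- arXiv:1905.02160 — 2 statements merged into one kernel-verified Lean document; each statement's English description precedes it below -/
import Mathlib

section
/- Fix k ∈ ℕ, k ≥ 1, and let Ψ := Φ_k ∘ Φ_{2k} : FIN_{±4k} → FIN_{±k}. Then Ψ is a surjective homomorphism of partial semigroups satisfying: (a) for every p₀ < p₁ in FIN_{±4k} and all j₀, j₁ ≤ k with min{j₀, j₁} = 0, Ψ(T^{4j₀}(p₀) + T^{4j₁}(p₁)) = T^{j₀}(Ψ(p₀)) + T^{j₁}(Ψ(p₁)); and (b) for all p₀, p₁ ∈ FIN_{±4k}, if ‖p₀ − p₁‖ ≤ 4 then ‖Ψ(p₀) − Ψ(p₁)‖ ≤ 1. -/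
open Function Set

/-- `p` is an element of `FIN_{±k}`: finitely supported, values in `{0, ±1, …, ±k}`,
attaining one of the values `±k`. -/
def IsFin (k : ℕ) (p : ℕ → ℤ) : Prop :=
  (Function.support p).Finite ∧ (∀ n, |p n| ≤ (k : ℤ)) ∧ (∃ n, |p n| = (k : ℤ))

/-- `p < q` in the block ordering: every point of `supp p` precedes every point of `supp q`. -/
def BlockLt (p q : ℕ → ℤ) : Prop :=
  ∀ m n : ℕ, p m ≠ 0 → q n ≠ 0 → m < n

/-- The tetris operation `T`. -/
def tetris (p : ℕ → ℤ) : ℕ → ℤ := fun n =>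
  if 0 < p n then p n - 1 else if p n < 0 then p n + 1 else 0

/-- The sign-flipped tetris operation `-T`. -/
def negT (p : ℕ → ℤ) : ℕ → ℤ := -(tetris p)

/-- The weak tetris operation `S`. -/
def Sop (p : ℕ → ℤ) : ℕ → ℤ := fun n => if |p n| = 1 then 0 else p n

/-- `‖p‖ ≤ c` for the `ℓ∞` norm. -/
def normLe (p : ℕ → ℤ) (c : ℕ) : Prop := ∀ n, |p n| ≤ (c : ℤ)

/-- `(A)_c`, the `c`-fattening of `A`. -/
def approx (c : ℕ) (A : Set (ℕ → ℤ)) : Set (ℕ → ℤ) :=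
  {p | ∃ q ∈ A, normLe (p - q) c}

/-- `P` is an infinite block sequence in `FIN_{±k}`. -/
def IsBlockSeq (k : ℕ) (P : ℕ → ℕ → ℤ) : Prop :=
  (∀ n, IsFin k (P n)) ∧ ∀ m n : ℕ, m < n → BlockLt (P m) (P n)

/-- `t` is a finite block sequence in `FIN_{±k}` (coded as a list). -/
def IsFinBlockSeq (k : ℕ) (t : List (ℕ → ℤ)) : Prop :=
  (∀ p ∈ t, IsFin k p) ∧ t.Pairwise BlockLt

/-- `q ∈ ⟨P⟩_{±k}`: `q = ε₀T^{j₀}(p_{n₀}) + ⋯ + ε_m T^{j_m}(p_{n_m})` with `n₀ < ⋯ < n_m`,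
`εᵢ ∈ {±1}`, `jᵢ < k` and `min jᵢ = 0`. -/
def InSpanPM (k : ℕ) (P : ℕ → ℕ → ℤ) (q : ℕ → ℤ) : Prop :=
  ∃ (m : ℕ) (n : Fin (m + 1) → ℕ) (ε : Fin (m + 1) → ℤ) (j : Fin (m + 1) → ℕ),
    StrictMono n ∧ (∀ i, ε i = 1 ∨ ε i = -1) ∧ (∀ i, j i < k) ∧ (∃ i, j i = 0) ∧
    q = ∑ i, ε i • tetris^[j i] (P (n i))

/-- `q ∈ ⟨P⟩_{(−T)}`. -/
def InSpanNegT (k : ℕ) (P : ℕ → ℕ → ℤ) (q : ℕ → ℤ) : Prop :=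
  ∃ (m : ℕ) (n : Fin (m + 1) → ℕ) (j : Fin (m + 1) → ℕ),
    StrictMono n ∧ (∀ i, j i < k) ∧ (∃ i, j i = 0) ∧
    q = ∑ i, negT^[j i] (P (n i))

/-- `q ∈ ⟨p_a, …, p_b⟩_{(−T)}`. -/
def InSpanNegTRange (k : ℕ) (P : ℕ → ℕ → ℤ) (a b : ℕ) (q : ℕ → ℤ) : Prop :=
  ∃ (m : ℕ) (n : Fin (m + 1) → ℕ) (j : Fin (m + 1) → ℕ),
    StrictMono n ∧ (∀ i, a ≤ n i ∧ n i ≤ b) ∧ (∀ i, j i < k) ∧ (∃ i, j i = 0) ∧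
    q = ∑ i, negT^[j i] (P (n i))

/-- A cofinite ultrafilter on `FIN_{±k}` (coded as an ultrafilter on `ℕ → ℤ`
concentrating on `FIN_{±k}`). -/
def IsCofiniteUF (k : ℕ) (𝒰 : Ultrafilter (ℕ → ℤ)) : Prop :=
  {p | IsFin k p} ∈ 𝒰 ∧ ∀ m : ℕ, {p : ℕ → ℤ | ∀ n < m, p n = 0} ∈ 𝒰

/-- `A ∈ 𝒰 + 𝒱`. -/
def SumMem (𝒰 𝒱 : Ultrafilter (ℕ → ℤ)) (A : Set (ℕ → ℤ)) : Prop :=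
  {p | {q | BlockLt p q ∧ p + q ∈ A} ∈ 𝒱} ∈ 𝒰

/-- `𝒰` is subsymmetric: `A ∈ 𝒰` implies `−(A)₁ ∈ 𝒰`. -/
def IsSubsymmetric (𝒰 : Ultrafilter (ℕ → ℤ)) : Prop :=
  ∀ A ∈ 𝒰, {p : ℕ → ℤ | -p ∈ approx 1 A} ∈ 𝒰

/-- `𝒰 + (−T)^j 𝒰 = (−T)^j 𝒰 + 𝒰 = 𝒰` for all `j ≤ k`. -/
def IsIdempotentUF (k : ℕ) (𝒰 : Ultrafilter (ℕ → ℤ)) : Prop :=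
  ∀ j ≤ k, ∀ A : Set (ℕ → ℤ),
    (SumMem 𝒰 (Ultrafilter.map (negT^[j]) 𝒰) A ↔ A ∈ 𝒰) ∧
    (SumMem (Ultrafilter.map (negT^[j]) 𝒰) 𝒰 A ↔ A ∈ 𝒰)

/-- A cofinite subsymmetric ultrafilter on `FIN_{±k}` idempotent with respect to
all the maps `(−T)^j`, `j ≤ k`. -/
def IsGowersUF (k : ℕ) (𝒰 : Ultrafilter (ℕ → ℤ)) : Prop :=
  IsCofiniteUF k 𝒰 ∧ IsSubsymmetric 𝒰 ∧ IsIdempotentUF k 𝒰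

/-- A `𝒰`-tree on `FIN_{±k}` with stem `s`. -/
structure IsUTree (k : ℕ) (𝒰 : Ultrafilter (ℕ → ℤ)) (U : Set (List (ℕ → ℤ)))
    (s : List (ℕ → ℤ)) : Prop where
  blocks : ∀ t ∈ U, IsFinBlockSeq k t
  prefixClosed : ∀ t ∈ U, ∀ t' : List (ℕ → ℤ), t' <+: t → t' ∈ U
  stemMem : s ∈ U
  stemComparable : ∀ t ∈ U, s <+: t ∨ t <+: s
  branch : ∀ t ∈ U, s <+: t → {p | t ++ [p] ∈ U} ∈ 𝒰

/-- `[U]`, the set of infinite branches of a tree of finite block sequences. -/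
def Branches (U : Set (List (ℕ → ℤ))) : Set (ℕ → ℕ → ℤ) :=
  {P | ∀ n : ℕ, (List.ofFn fun i : Fin n => P i.1) ∈ U}

/-- The space `FIN_{±k}^[∞]` of infinite block sequences. -/
def BlockSeq (k : ℕ) : Type := {P : ℕ → ℕ → ℤ // IsBlockSeq k P}

/-- The metrizable topology on `FIN_{±k}^[∞]`, generated by the basic sets `[s]`. -/
instance BlockSeq.topology (k : ℕ) : TopologicalSpace (BlockSeq k) :=
  TopologicalSpace.generateFrom
    {O | ∃ s : List (ℕ → ℤ),
      O = {P : BlockSeq k | ∀ i : Fin s.length, P.1 i.1 = s.get i}}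

/-- The Souslin operation applied to a Souslin scheme. -/
def SouslinOp {α : Type*} (F : List ℕ → Set α) : Set α :=
  ⋃ x : ℕ → ℕ, ⋂ n : ℕ, F (List.ofFn fun i : Fin n => x i.1)

/-- `A` is Souslin measurable: it belongs to every field of sets containing the open
sets and closed under the Souslin operation. -/
def SouslinMeasurable {α : Type*} [TopologicalSpace α] (A : Set α) : Prop :=
  ∀ 𝓕 : Set (Set α),
    (∀ O : Set α, IsOpen O → O ∈ 𝓕) →
    (∀ B ∈ 𝓕, Bᶜ ∈ 𝓕) →
    (∀ B ∈ 𝓕, ∀ C ∈ 𝓕, B ∪ C ∈ 𝓕) →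
    (∀ F : List ℕ → Set α, (∀ s, F s ∈ 𝓕) → SouslinOp F ∈ 𝓕) →
    A ∈ 𝓕

/-- The map `Φ_m : FIN_{±2m} → FIN_{±m}` (its defining formula does not depend on `m`). -/
def Phi (p : ℕ → ℤ) : ℕ → ℤ := fun n =>
  if p n % 2 = 0 then p n / 2
  else if 0 < p n then (p n - 1) / 2
  else (p n + 1) / 2

/-- `Ψ = Φ_k ∘ Φ_{2k} : FIN_{±4k} → FIN_{±k}`. -/
def Psi (p : ℕ → ℤ) : ℕ → ℤ := Phi (Phi p)

/-!
Halving towards zero twice is division by `4` rounding towards zero. Write a coordinate as `s * m`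
with `s` a sign and `m : ℕ`. Then `T ^ j` replaces `m` by the truncated difference `m - j`, and
division by `d` replaces `m` by `m / d`, so the identity `(m - d * j) / d = m / d - j` says that
division by `d` intertwines `T ^ (d * j)` with `T ^ j`. Additivity on disjoint supports is
coordinatewise, and `q ↦ d • q` is a right inverse. Finally, rounding towards zero is monotone and
adding `d` raises the quotient by at most one, which bounds the change of norm.
-/

theorem exists_eq_signType_mul_natCast (a : ℤ) : ∃ (s : SignType) (m : ℕ), a = s * m :=
  ⟨SignType.sign a, a.natAbs, by rw [Int.natCast_natAbs, sign_mul_abs]⟩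

theorem signType_mul_natCast_tdiv (s : SignType) (m d : ℕ) :
    ((s : ℤ) * m).tdiv d = s * (m / d : ℕ) := by
  cases s <;> simp

theorem tdiv_tdiv_natCast (a : ℤ) (c d : ℕ) : (a.tdiv c).tdiv d = a.tdiv (c * d : ℕ) := by
  obtain ⟨s, m, rfl⟩ := exists_eq_signType_mul_natCast a
  simp only [signType_mul_natCast_tdiv, Nat.div_div_eq_div_mul]

theorem abs_tdiv_natCast (a : ℤ) (d : ℕ) : |a.tdiv d| = |a| / d := by
  rw [Int.abs_eq_natAbs, Int.natAbs_tdiv, Int.abs_eq_natAbs]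
  rfl

theorem add_natCast_tdiv_self_le (a : ℤ) (d : ℕ) : (a + d).tdiv d ≤ a.tdiv d + 1 := by
  obtain rfl | hd := d.eq_zero_or_pos
  · simp
  have hd' : (0 : ℤ) < d := Nat.cast_pos.mpr hd
  simp only [Int.tdiv_eq_ediv, Int.add_ediv_of_dvd_right dvd_rfl, Int.ediv_self hd'.ne',
    Int.sign_eq_one_of_pos hd', dvd_add_self_right]
  split_ifs <;> omega

theorem tdiv_sub_tdiv_le_one {a b : ℤ} {d : ℕ} (h : a - b ≤ d) : a.tdiv d - b.tdiv d ≤ 1 := by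
  obtain rfl | hd := d.eq_zero_or_pos
  · simp
  refine sub_le_iff_le_add'.mpr ?_
  calc a.tdiv d ≤ (b + d).tdiv d :=
        Int.tdiv_le_tdiv (Nat.cast_pos.mpr hd) (sub_le_iff_le_add'.mp h)
    _ ≤ b.tdiv d + 1 := add_natCast_tdiv_self_le b d

theorem tetris_apply_of_eq {p : ℕ → ℤ} {n : ℕ} {s : SignType} {m : ℕ} (h : p n = s * m) :
    tetris p n = s * (m - 1 : ℕ) := by
  cases s <;>
  · simp only [tetris, h, SignType.zero_eq_zero, SignType.neg_eq_neg_one, SignType.pos_eq_one,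
      SignType.coe_zero, SignType.coe_neg_one, SignType.coe_one]
    split_ifs <;> omega

theorem tetris_iterate_apply_of_eq {p : ℕ → ℤ} {n : ℕ} {s : SignType} {m : ℕ}
    (h : p n = s * m) (j : ℕ) : tetris^[j] p n = s * (m - j : ℕ) := by
  induction j with
  | zero => exact h
  | succ j ih => rw [iterate_succ_apply', tetris_apply_of_eq ih, Nat.sub_sub]

theorem support_tetris_iterate_subset (j : ℕ) (p : ℕ → ℤ) :
    support (tetris^[j] p) ⊆ support p := by
  intro n hn hpn
  have hzero : p n = (0 : SignType) * (0 : ℕ) := by simpa using hpn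
  exact hn (by simpa using tetris_iterate_apply_of_eq hzero j)

/-- Coordinatewise division by `d`, rounding towards zero. It generalizes `Ψ`, which is the case
`d = 4`, to a map `FIN_{±dk} → FIN_{±k}`; for `d = 0` it is identically zero. -/
def truncDiv (d : ℕ) (p : ℕ → ℤ) : ℕ → ℤ := fun n => (p n).tdiv d

theorem Phi_eq_truncDiv (p : ℕ → ℤ) : Phi p = truncDiv 2 p := by
  funext n
  simp only [Phi, truncDiv, Nat.cast_ofNat, Int.tdiv_eq_ediv, Int.sign_eq_one_of_pos two_pos]
  split_ifs <;> omega

theorem Psi_eq_truncDiv (p : ℕ → ℤ) : Psi p = truncDiv 4 p := by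
  funext n
  simp only [Psi, Phi_eq_truncDiv, truncDiv, tdiv_tdiv_natCast, Nat.reduceMul]

theorem isFin_truncDiv {d k : ℕ} {p : ℕ → ℤ} (hp : IsFin (d * k) p) (hd : d ≠ 0) :
    IsFin k (truncDiv d p) := by
  obtain ⟨hfinite, hbound, m, hm⟩ := hp
  have hd' : (0 : ℤ) < d := by positivity
  refine ⟨hfinite.subset fun n hn hpn => hn ?_, fun n => ?_, m, ?_⟩
  · rw [truncDiv, hpn, Int.zero_tdiv]
  · rw [truncDiv, abs_tdiv_natCast]
    exact Int.ediv_le_of_le_mul hd' (by simpa [mul_comm] using hbound n)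
  · rw [truncDiv, abs_tdiv_natCast, hm, Nat.cast_mul, Int.mul_ediv_cancel_left _ hd'.ne']

theorem IsFin.nsmul {k : ℕ} {q : ℕ → ℤ} (hq : IsFin k q) (d : ℕ) : IsFin (d * k) (d • q) := by
  obtain ⟨hfinite, hbound, m, hm⟩ := hq
  have habs (n : ℕ) : |(d • q) n| = d * |q n| := by
    rw [Pi.smul_apply, abs_nsmul, nsmul_eq_mul]
  refine ⟨hfinite.subset (support_const_smul_subset d q), fun n => ?_, m, ?_⟩
  · rw [habs, Nat.cast_mul]
    exact mul_le_mul_of_nonneg_left (hbound n) d.cast_nonneg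
  · rw [habs, hm, Nat.cast_mul]

theorem truncDiv_nsmul {d : ℕ} (hd : d ≠ 0) (q : ℕ → ℤ) : truncDiv d (d • q) = q := by
  funext n
  rw [truncDiv, Pi.smul_apply, nsmul_eq_mul, Int.mul_tdiv_cancel_left _ (Nat.cast_ne_zero.mpr hd)]

theorem BlockLt.disjoint_support {p q : ℕ → ℤ} (h : BlockLt p q) :
    Disjoint (support p) (support q) :=
  Set.disjoint_left.mpr fun n hp hq => (h n n hp hq).false

theorem truncDiv_add {p q : ℕ → ℤ} (h : Disjoint (support p) (support q)) (d : ℕ) :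
    truncDiv d (p + q) = truncDiv d p + truncDiv d q := by
  funext n
  obtain hp | hq : p n = 0 ∨ q n = 0 := by
    by_contra! hne
    exact Set.disjoint_left.mp h hne.1 hne.2
  · simp only [truncDiv, Pi.add_apply, hp, zero_add, Int.zero_tdiv]
  · simp only [truncDiv, Pi.add_apply, hq, add_zero, Int.zero_tdiv]

theorem truncDiv_tetris_iterate (d j : ℕ) (p : ℕ → ℤ) :
    truncDiv d (tetris^[d * j] p) = tetris^[j] (truncDiv d p) := by
  funext n
  obtain ⟨s, m, hpn⟩ := exists_eq_signType_mul_natCast (p n)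
  have hquot : truncDiv d p n = s * (m / d : ℕ) := by
    rw [truncDiv, hpn, signType_mul_natCast_tdiv]
  calc truncDiv d (tetris^[d * j] p) n
      = s * ((m - d * j) / d : ℕ) := by
        rw [truncDiv, tetris_iterate_apply_of_eq hpn, signType_mul_natCast_tdiv]
    _ = s * (m / d - j : ℕ) := by rw [Nat.sub_mul_div]
    _ = tetris^[j] (truncDiv d p) n := (tetris_iterate_apply_of_eq hquot j).symm

theorem normLe_truncDiv_sub {d : ℕ} {p q : ℕ → ℤ} (h : normLe (p - q) d) :
    normLe (truncDiv d p - truncDiv d q) 1 := fun n => by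
  obtain ⟨hlower, hupper⟩ := abs_sub_le_iff.mp (h n)
  exact abs_sub_le_iff.mpr ⟨tdiv_sub_tdiv_le_one hlower, tdiv_sub_tdiv_le_one hupper⟩

theorem Psi_properties_general (k : ℕ) {d : ℕ} (hd : d ≠ 0) :
    (∀ p : ℕ → ℤ, IsFin (d * k) p → IsFin k (truncDiv d p)) ∧
    (∀ q : ℕ → ℤ, IsFin k q → ∃ p : ℕ → ℤ, IsFin (d * k) p ∧ truncDiv d p = q) ∧
    (∀ p q : ℕ → ℤ, Disjoint (support p) (support q) →
      truncDiv d (p + q) = truncDiv d p + truncDiv d q) ∧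
    (∀ p₀ p₁ : ℕ → ℤ, Disjoint (support p₀) (support p₁) → ∀ j₀ j₁ : ℕ,
      truncDiv d (tetris^[d * j₀] p₀ + tetris^[d * j₁] p₁) =
        tetris^[j₀] (truncDiv d p₀) + tetris^[j₁] (truncDiv d p₁)) ∧
    (∀ p₀ p₁ : ℕ → ℤ, normLe (p₀ - p₁) d → normLe (truncDiv d p₀ - truncDiv d p₁) 1) := by
  refine ⟨fun p hp => isFin_truncDiv hp hd, fun q hq => ⟨d • q, hq.nsmul d, truncDiv_nsmul hd q⟩,
    fun p q h => truncDiv_add h d, fun p₀ p₁ h j₀ j₁ => ?_, fun p₀ p₁ h => normLe_truncDiv_sub h⟩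
  rw [truncDiv_add (h.mono (support_tetris_iterate_subset _ _) (support_tetris_iterate_subset _ _)),
    truncDiv_tetris_iterate, truncDiv_tetris_iterate]

/-- `Ψ = Φ_k ∘ Φ_{2k} : FIN_{±4k} → FIN_{±k}` is a surjective
homomorphism of partial semigroups satisfying properties (a) and (b). -/
theorem Psi_properties (k : ℕ) (hk : 1 ≤ k) :
    (∀ p : ℕ → ℤ, IsFin (4 * k) p → IsFin k (Psi p)) ∧
    (∀ q : ℕ → ℤ, IsFin k q → ∃ p : ℕ → ℤ, IsFin (4 * k) p ∧ Psi p = q) ∧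
    (∀ p q : ℕ → ℤ, IsFin (4 * k) p → IsFin (4 * k) q → BlockLt p q →
      Psi (p + q) = Psi p + Psi q) ∧
    (∀ p₀ p₁ : ℕ → ℤ, IsFin (4 * k) p₀ → IsFin (4 * k) p₁ → BlockLt p₀ p₁ →
      ∀ j₀ j₁ : ℕ, j₀ ≤ k → j₁ ≤ k → (j₀ = 0 ∨ j₁ = 0) →
        Psi (tetris^[4 * j₀] p₀ + tetris^[4 * j₁] p₁) =
          tetris^[j₀] (Psi p₀) + tetris^[j₁] (Psi p₁)) ∧
    (∀ p₀ p₁ : ℕ → ℤ, IsFin (4 * k) p₀ → IsFin (4 * k) p₁ →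
      normLe (p₀ - p₁) 4 → normLe (Psi p₀ - Psi p₁) 1) := by
  obtain ⟨hmaps, hsurj, hadd, htetris, hnorm⟩ := Psi_properties_general k four_ne_zero
  simp only [Psi_eq_truncDiv]
  exact ⟨hmaps, hsurj, fun p q _ _ h => hadd p q h.disjoint_support,
    fun p₀ p₁ _ _ h j₀ j₁ _ _ _ => htetris p₀ p₁ h.disjoint_support j₀ j₁,
    fun p₀ p₁ _ _ => hnorm p₀ p₁⟩
end

section
/- (Relativized main theorem.) For every k, r ∈ ℕ with k, r ≥ 1, every infinite block sequence P in FIN_{±k}, and every Souslin measurable colouring c : FIN_{±k}^[∞] → {0, …, r−1} (with respect to the metrizable topology), there exist i < r and an infinite block sequence Q ≤ P such that ⟨Q⟩_{±k}^[∞] ⊆ (c⁻¹{i})₁. -/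
open Function Set

/-!
Fix an ultrafilter `U` on `FIN_k` with `U + T ^ a U = T ^ a U + U = U` for all `a`. Relative to `U`,
the sets that are decided, below every stem, by the branches of a `U`-tree behave like measurable
sets: density points provide measurable hulls, so by Marczewski's theorem they are closed under the
Souslin operation. Some colour `i` therefore contains all the branches of a `U`-tree, and a fusion
along this tree gives a sequence all of whose `FIN_k`-combinations are such branches.

To pass to `FIN_{±k}`, evaluate a code `f` in `FIN_k` at a sequence `P` as the combination
`∑ (-T) ^ (k - f n) (P n)`. Substitution of codes corresponds to iterated combination, which yields
a sequence `P'` all of whose `(-T)`-combinations have colour `i`. Since shifting an exponent of `-T`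
by one flips the sign and moves values by at most `1`, every signed combination of the sequence
`P' 0 - T (P' 1), P' 2 - T (P' 3), …` is within distance `1` of a `(-T)`-combination of `P'`.
-/

open Filter PiNat

section Prefixes

variable {α : Type*}

lemma rtake_res (x : ℕ → α) {m n : ℕ} (h : m ≤ n) : (res x n).rtake m = res x m := by
  induction n, h using Nat.le_induction with
  | base => simp [List.rtake]
  | succ n hmn ih =>
    rw [← ih, res_succ, List.rtake, List.rtake, List.length_cons, Nat.succ_sub (by simpa using hmn)]
    rfl

lemma ofFn_eq_reverse_res (x : ℕ → α) (n : ℕ) :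
    List.ofFn (fun i : Fin n => x i) = (res x n).reverse := by
  induction n with
  | zero => rfl
  | succ n ih => simp only [List.ofFn_succ', List.concat_eq_append, Fin.val_castSucc, ih,
      Fin.val_last, res_succ, List.reverse_cons]

lemma exists_forall_mem_res {A : List α → Set α} (hA : ∀ s, (A s).Nonempty) :
    ∃ x : ℕ → α, ∀ n, x n ∈ A (res x n) := by
  choose g hg using hA
  let r : ℕ → List α := Nat.rec [] fun _ s => g s :: s
  have hr : ∀ n, res (fun m => g (r m)) n = r n := fun n => by
    induction n with
    | zero => rfl
    | succ n ih => rw [res_succ, ih]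
  exact ⟨fun n => g (r n), fun n => by rw [hr]; exact hg _⟩

lemma mem_res {x : ℕ → α} {n : ℕ} {a : α} : a ∈ res x n ↔ ∃ m < n, x m = a := by
  rw [← List.mem_reverse, ← ofFn_eq_reverse_res, List.mem_ofFn]
  exact ⟨fun ⟨m, hm⟩ => ⟨m, m.2, hm⟩, fun ⟨m, hmn, hm⟩ => ⟨⟨m, hmn⟩, hm⟩⟩

end Prefixes

section Souslin

variable {X : Type*} [MeasurableSpace X] (l : Filter X)

/-- `Z` is a measurable hull of `Y` modulo `l`: a measurable set that contains `Y` and is smallest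
among such sets, both up to sets negligible for `l`. -/
def IsMeasurableHull (Y Z : Set X) : Prop :=
  MeasurableSet Z ∧ Y ≤ᶠ[l] Z ∧ ∀ W, MeasurableSet W → Y ≤ᶠ[l] W → Z ≤ᶠ[l] W

variable {l}

lemma mem_souslinOp {Y : Type*} {F : List ℕ → Set Y} {p : Y} :
    p ∈ SouslinOp F ↔ ∃ x : ℕ → ℕ, ∀ n, p ∈ F (res x n).reverse := by
  simp only [SouslinOp, mem_iUnion, mem_iInter, ofFn_eq_reverse_res]

/-- The part of the Souslin operation coming from the sequences extending the finite sequence `s`,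
which is listed in reverse, as in `PiNat.res`. -/
def souslinStar {Y : Type*} (F : List ℕ → Set Y) (s : List ℕ) : Set Y :=
  {p | ∃ x : ℕ → ℕ, res x s.length = s ∧ ∀ n, p ∈ F (res x n).reverse}

lemma souslinStar_nil {Y : Type*} (F : List ℕ → Set Y) : souslinStar F [] = SouslinOp F := by
  ext p
  simp [souslinStar, mem_souslinOp]

lemma souslinStar_subset {Y : Type*} (F : List ℕ → Set Y) (s : List ℕ) :
    souslinStar F s ⊆ F s.reverse := by
  rintro p ⟨x, hxs, hx⟩
  simpa only [hxs] using hx s.length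

lemma souslinStar_subset_iUnion {Y : Type*} (F : List ℕ → Set Y) (s : List ℕ) :
    souslinStar F s ⊆ ⋃ n, souslinStar F (n :: s) := by
  rintro p ⟨x, hxs, hx⟩
  exact mem_iUnion.2 ⟨x s.length, x, by rw [List.length_cons, res_succ, hxs], hx⟩

/-- Marczewski's theorem. -/
theorem eventuallyMeasurableSet_souslinOp [CountableInterFilter l]
    (hull : ∀ Y : Set X, ∃ Z, IsMeasurableHull l Y Z) {F : List ℕ → Set X}
    (hF : ∀ s, MeasurableSet (F s)) : EventuallyMeasurableSet ‹_› l (SouslinOp F) := by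
  choose H hHmeas hHle hHmin using fun s => hull (souslinStar F s)
  have hHF (s : List ℕ) : H s ≤ᶠ[l] F s.reverse :=
    hHmin s _ (hF _) (souslinStar_subset F s).eventuallyLE
  have hHstep (s : List ℕ) : H s ≤ᶠ[l] (⋃ n, H (n :: s) : Set X) :=
    hHmin s _ (.iUnion fun n => hHmeas _) <|
      (souslinStar_subset_iUnion F s).eventuallyLE.trans <| .countable_iUnion fun n => hHle _
  refine ⟨H [], hHmeas [], EventuallyLE.antisymm (souslinStar_nil F ▸ hHle []) ?_⟩
  filter_upwards [eventually_countable_forall.2 hHF, eventually_countable_forall.2 hHstep]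
    with p hpF hpstep hp
  -- Starting from `p ∈ H []`, extend the finite sequence one term at a time, staying inside `H`.
  have hext (s : List ℕ) : {n | p ∈ H s → p ∈ H (n :: s)}.Nonempty := by
    by_cases hs : p ∈ H s
    · obtain ⟨n, hn⟩ := mem_iUnion.1 (hpstep s hs)
      exact ⟨n, fun _ => hn⟩
    · exact ⟨0, fun h => absurd h hs⟩
  obtain ⟨x, hx⟩ := exists_forall_mem_res hext
  have hxH (n : ℕ) : p ∈ H (res x n) := by
    induction n with
    | zero => exact hp
    | succ n ih => exact hx n ih
  exact mem_souslinOp.2 ⟨x, fun n => hpF _ (hxH n)⟩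

end Souslin

section Trees

variable {α : Type*} {U : Ultrafilter α} {s : List α} {X Y : Set (ℕ → α)}

/-- The branches of the tree with stem `s` in which a node `t` extending `s` is followed by the
elements of `A t`. Nodes are listed in reverse, as in `PiNat.res`. -/
def treeBox (s : List α) (A : List α → Set α) : Set (ℕ → α) :=
  {x | res x s.length = s ∧ ∀ n ≥ s.length, x n ∈ A (res x n)}

lemma treeBox_mono {A B : List α → Set α} (h : ∀ t, A t ⊆ B t) : treeBox s A ⊆ treeBox s B :=
  fun _ hx => ⟨hx.1, fun n hn => h _ (hx.2 n hn)⟩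

lemma treeBox_res_subset {A : List α → Set α} {x : ℕ → α} (hx : x ∈ treeBox s A) {n : ℕ}
    (hn : s.length ≤ n) : treeBox (res x n) A ⊆ treeBox s A := by
  rintro y ⟨hy, hyA⟩
  rw [res_length] at hy hyA
  have hyx {m : ℕ} (hm : m ≤ n) : res y m = res x m := by
    rw [← rtake_res y hm, ← rtake_res x hm, hy]
  refine ⟨(hyx hn).trans hx.1, fun m hm => ?_⟩
  rcases le_or_gt n m with hnm | hmn
  · exact hyA m hnm
  · rw [hyx hmn.le, res_eq_res.1 hy hmn]
    exact hx.2 m hm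

/-- The filter generated by the sets of branches of the `U`-trees with stem `s`. -/
def branchFilter (U : Ultrafilter α) (s : List α) : Filter (ℕ → α) where
  sets := {X | ∃ A : List α → Set α, (∀ t, A t ∈ U) ∧ treeBox s A ⊆ X}
  univ_sets := ⟨fun _ => univ, fun _ => univ_mem, subset_univ _⟩
  sets_of_superset := fun ⟨A, hA, hX⟩ hXY => ⟨A, hA, hX.trans hXY⟩
  inter_sets := fun ⟨A, hA, hX⟩ ⟨B, hB, hY⟩ =>
    ⟨fun t => A t ∩ B t, fun t => inter_mem (hA t) (hB t), subset_inter
      ((treeBox_mono fun _ => inter_subset_left).trans hX)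
      ((treeBox_mono fun _ => inter_subset_right).trans hY)⟩

lemma treeBox_mem_branchFilter {A : List α → Set α} (hA : ∀ t, A t ∈ U) (s : List α) :
    treeBox s A ∈ branchFilter U s :=
  ⟨A, hA, Subset.rfl⟩

instance branchFilter_nil_neBot (U : Ultrafilter α) : (branchFilter U []).NeBot := by
  rw [← forall_mem_nonempty_iff_neBot]
  rintro X ⟨A, hA, hX⟩
  obtain ⟨x, hx⟩ := exists_forall_mem_res fun t => U.nonempty_of_mem (hA t)
  exact ⟨x, hX ⟨rfl, fun n _ => hx n⟩⟩

lemma eventually_res_eq (U : Ultrafilter α) (s : List α) :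
    ∀ᶠ x in branchFilter U s, res x s.length = s :=
  mem_of_superset (treeBox_mem_branchFilter (fun _ => univ_mem) s) fun _ hx => hx.1

/-- Diagonal intersection: one `U`-tree handles at each of its nodes the requirement attached to
that node. -/
lemma eventually_forall_mem_res {Y : List α → Set (ℕ → α)} (hY : ∀ t, Y t ∈ branchFilter U t)
    (s : List α) : ∀ᶠ x in branchFilter U s, ∀ n ≥ s.length, x ∈ Y (res x n) := by
  choose C hCU hCY using hY
  let A : List α → Set α := fun t => ⋂ i ∈ Iic t.length, C (t.rtake i) t
  have hA (t : List α) : A t ∈ U := (biInter_mem (finite_Iic _)).2 fun i _ => hCU _ _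
  filter_upwards [treeBox_mem_branchFilter hA s] with x hx n hn
  refine hCY _ ⟨by rw [res_length], fun m hm => ?_⟩
  rw [res_length] at hm
  have hxm : x m ∈ C ((res x m).rtake n) (res x m) :=
    mem_iInter₂.1 (hx.2 m (hn.trans hm)) n (by rwa [mem_Iic, res_length])
  rwa [rtake_res x hm] at hxm

lemma eventually_forall_res_imp_mem (U : Ultrafilter α) (s : List α) (X : Set (ℕ → α)) :
    ∀ᶠ x in branchFilter U s, ∀ n ≥ s.length, X ∈ branchFilter U (res x n) → x ∈ X := by
  let Y : List α → Set (ℕ → α) := fun t => {x | X ∈ branchFilter U t → x ∈ X}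
  refine eventually_forall_mem_res (Y := Y) (fun t => ?_) s
  by_cases ht : X ∈ branchFilter U t
  · exact mem_of_superset ht fun x hx _ => hx
  · exact univ_mem' fun x hx => absurd hx ht

lemma mem_branchFilter_of_eventually_cons (h : ∀ᶠ p in U, X ∈ branchFilter U (p :: s)) :
    X ∈ branchFilter U s := by
  let A : List α → Set α := fun t => {p | t = s → X ∈ branchFilter U (p :: t)}
  have hA (t : List α) : A t ∈ U := by
    filter_upwards [h] with p hp hts
    rwa [hts]
  filter_upwards [treeBox_mem_branchFilter hA s, eventually_forall_res_imp_mem U s X]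
    with x ⟨hxs, hxA⟩ hx
  exact hx (s.length + 1) (Nat.le_succ _) (hxA s.length le_rfl hxs)

variable (U) in
/-- The analogue, for `U`-trees, of the set of Lebesgue density points of `X`. -/
def branchDensity (X : Set (ℕ → α)) : Set (ℕ → α) :=
  {x | ∀ᶠ n in atTop, X ∈ branchFilter U (res x n)}

lemma branchDensity_mem (h : X ∈ branchFilter U s) : branchDensity U X ∈ branchFilter U s := by
  obtain ⟨A, hA, hAX⟩ := h
  filter_upwards [treeBox_mem_branchFilter hA s] with x hx
  filter_upwards [eventually_ge_atTop s.length] with n hn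
  exact ⟨A, hA, (treeBox_res_subset hx hn).trans hAX⟩

lemma compl_branchDensity_mem (h : X ∉ branchFilter U s) :
    (branchDensity U X)ᶜ ∈ branchFilter U s := by
  let A : List α → Set α := fun t => {p | X ∉ branchFilter U t → X ∉ branchFilter U (p :: t)}
  have hA (t : List α) : A t ∈ U := by
    by_cases ht : X ∈ branchFilter U t
    · exact univ_mem' fun p h => absurd ht h
    · filter_upwards [Ultrafilter.eventually_not.2 (mt mem_branchFilter_of_eventually_cons ht)]
        with p hp _ using hp
  filter_upwards [treeBox_mem_branchFilter hA s] with x ⟨hxs, hxA⟩ hx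
  have hxX (n : ℕ) (hn : s.length ≤ n) : X ∉ branchFilter U (res x n) := by
    induction n, hn using Nat.le_induction with
    | base => rwa [hxs]
    | succ n hn ih => exact hxA n hn ih
  obtain ⟨n, hn, hxn⟩ := (hx.and (eventually_ge_atTop s.length)).exists
  exact hxX n hxn hn

/-- The filter of the sets whose complement is Ramsey null. -/
def ramseyAE (U : Ultrafilter α) : Filter (ℕ → α) := ⨆ s, branchFilter U s

lemma eventually_ramseyAE {p : (ℕ → α) → Prop} :
    (∀ᶠ x in ramseyAE U, p x) ↔ ∀ s, ∀ᶠ x in branchFilter U s, p x :=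
  eventually_iSup

lemma branchFilter_le_ramseyAE (U : Ultrafilter α) (s : List α) :
    branchFilter U s ≤ ramseyAE U :=
  le_iSup _ s

lemma iInter_mem_ramseyAE {X : ℕ → Set (ℕ → α)} (hX : ∀ i, X i ∈ ramseyAE U) :
    (⋂ i, X i) ∈ ramseyAE U := by
  refine eventually_ramseyAE.2 fun s => ?_
  have hY (t : List α) : (⋂ i ∈ Iic t.length, X i) ∈ branchFilter U t :=
    (biInter_mem (finite_Iic _)).2 fun i _ => branchFilter_le_ramseyAE U t (hX i)
  filter_upwards [eventually_forall_mem_res hY s] with x hx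
  refine mem_iInter.2 fun i => mem_iInter₂.1 (hx (max i s.length) (le_max_right _ _)) i ?_
  rw [mem_Iic, res_length]
  exact le_max_left _ _

instance ramseyAE_countableInterFilter (U : Ultrafilter α) : CountableInterFilter (ramseyAE U) where
  countable_sInter_mem S hS hSU := by
    rcases S.eq_empty_or_nonempty with rfl | hne
    · simp
    · obtain ⟨X, rfl⟩ := hS.exists_eq_range hne
      exact iInter_mem_ramseyAE fun i => hSU _ ⟨i, rfl⟩

lemma branchDensity_subset (h : X ≤ᶠ[ramseyAE U] Y) : branchDensity U X ⊆ branchDensity U Y :=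
  fun x hx => hx.mono fun n hn => by
    filter_upwards [hn, branchFilter_le_ramseyAE U (res x n) h] with y hyX hyXY using hyXY hyX

lemma branchDensity_eventuallyLE (U : Ultrafilter α) (X : Set (ℕ → α)) :
    branchDensity U X ≤ᶠ[ramseyAE U] X := by
  refine eventually_ramseyAE.2 fun s => ?_
  filter_upwards [eventually_forall_res_imp_mem U s X] with x hx hxD
  obtain ⟨n, hn, hsn⟩ := (Eventually.and hxD (eventually_ge_atTop s.length)).exists
  exact hx n hsn hn

/-- `X` is completely Ramsey for `U`: below every stem, the branches of some `U`-tree lie all in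
`X` or all outside `X`. -/
def IsRamsey (U : Ultrafilter α) (X : Set (ℕ → α)) : Prop :=
  ∀ s, X ∈ branchFilter U s ∨ Xᶜ ∈ branchFilter U s

lemma IsRamsey.compl (h : IsRamsey U X) : IsRamsey U Xᶜ := fun s => by
  rw [compl_compl]
  exact (h s).symm

lemma IsRamsey.congr (h : IsRamsey U Y) (hXY : X =ᶠ[ramseyAE U] Y) : IsRamsey U X := fun s => by
  have hXYs := branchFilter_le_ramseyAE U s hXY
  refine (h s).imp (fun hY => ?_) fun hY => ?_
  · filter_upwards [hY, hXYs] with x hx hxXY using hxXY.mpr hx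
  · filter_upwards [hY, hXYs] with x hx hxXY using mt hxXY.mp hx

lemma isRamsey_branchDensity (U : Ultrafilter α) (X : Set (ℕ → α)) :
    IsRamsey U (branchDensity U X) := fun s =>
  (em (X ∈ branchFilter U s)).imp branchDensity_mem compl_branchDensity_mem

lemma isRamsey_iff_eventuallyLE_branchDensity :
    IsRamsey U X ↔ X ≤ᶠ[ramseyAE U] branchDensity U X := by
  refine ⟨fun h => eventually_ramseyAE.2 fun s => ?_, fun h =>
    (isRamsey_branchDensity U X).congr (h.antisymm (branchDensity_eventuallyLE U X))⟩
  rcases h s with hs | hs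
  · filter_upwards [branchDensity_mem hs] with x hx _ using hx
  · filter_upwards [hs] with x hx hxX using absurd hxX hx

lemma IsRamsey.iUnion {X : ℕ → Set (ℕ → α)} (h : ∀ i, IsRamsey U (X i)) :
    IsRamsey U (⋃ i, X i) :=
  isRamsey_iff_eventuallyLE_branchDensity.2 <|
    (Filter.EventuallyLE.countable_iUnion fun i =>
      isRamsey_iff_eventuallyLE_branchDensity.1 (h i)).trans
        (iUnion_subset fun i => branchDensity_subset (subset_iUnion X i).eventuallyLE).eventuallyLE

/-- The `σ`-algebra of the completely Ramsey sets. -/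
@[reducible]
def ramseyMeasurableSpace (U : Ultrafilter α) : MeasurableSpace (ℕ → α) where
  MeasurableSet' := IsRamsey U
  measurableSet_empty s := .inr (by simp)
  measurableSet_compl _ := IsRamsey.compl
  measurableSet_iUnion _ := IsRamsey.iUnion

lemma IsRamsey.union (hX : IsRamsey U X) (hY : IsRamsey U Y) : IsRamsey U (X ∪ Y) :=
  @MeasurableSet.union _ (ramseyMeasurableSpace U) _ _ hX hY

lemma isMeasurableHull_compl_branchDensity_compl (U : Ultrafilter α) (Y : Set (ℕ → α)) :
    @IsMeasurableHull _ (ramseyMeasurableSpace U) (ramseyAE U) Y (branchDensity U Yᶜ)ᶜ := by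
  refine ⟨(isRamsey_branchDensity U Yᶜ).compl, ?_, fun W hW hYW => ?_⟩
  · simpa only [compl_compl] using (branchDensity_eventuallyLE U Yᶜ).compl
  · simpa only [compl_compl] using
      ((isRamsey_iff_eventuallyLE_branchDensity.1 (IsRamsey.compl hW)).trans
        (branchDensity_subset hYW.compl).eventuallyLE).compl

theorem IsRamsey.souslinOp {F : List ℕ → Set (ℕ → α)} (hF : ∀ s, IsRamsey U (F s)) :
    IsRamsey U (SouslinOp F) := by
  let := ramseyMeasurableSpace U
  obtain ⟨T, hT, hFT⟩ := eventuallyMeasurableSet_souslinOp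
    (fun Y => ⟨_, isMeasurableHull_compl_branchDensity_compl U Y⟩) hF
  exact IsRamsey.congr hT hFT

theorem exists_preimage_mem_branchFilter_nil {ι : Type*} [Finite ι] {c : (ℕ → α) → ι}
    (hc : ∀ i, IsRamsey U (c ⁻¹' {i})) : ∃ i, c ⁻¹' {i} ∈ branchFilter U [] := by
  by_contra! h
  obtain ⟨x, hx⟩ := (eventually_all.2 fun i => (hc i []).resolve_left (h i)).exists
  exact hx (c x) rfl

variable [TopologicalSpace α] [DiscreteTopology α]

lemma isRamsey_of_isOpen (hX : IsOpen X) (U : Ultrafilter α) : IsRamsey U X := by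
  refine isRamsey_iff_eventuallyLE_branchDensity.2 (Eventually.of_forall fun x hx => ?_)
  obtain ⟨_, ⟨y, n, rfl⟩, hxy, hyX⟩ :=
    (isTopologicalBasis_cylinders fun _ : ℕ => α).exists_subset_of_mem_open hx hX
  rw [← mem_cylinder_iff_eq.1 hxy, cylinder_eq_res] at hyX
  filter_upwards [eventually_ge_atTop n] with m hnm
  filter_upwards [eventually_res_eq U (res x m)] with z hz
  rw [res_length] at hz
  exact hyX (show res z n = res x n by rw [← rtake_res z hnm, ← rtake_res x hnm, hz])

theorem SouslinMeasurable.isRamsey_preimage {Z : Type*} [TopologicalSpace Z] {B : Set Z}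
    (hB : SouslinMeasurable B) {f : (ℕ → α) → Z} (hf : Continuous f) (U : Ultrafilter α) :
    IsRamsey U (f ⁻¹' B) := by
  refine hB {C | IsRamsey U (f ⁻¹' C)} (fun O hO => isRamsey_of_isOpen (hO.preimage hf) U)
    (fun C hC => IsRamsey.compl hC) (fun C hC D hD => IsRamsey.union hC hD) fun F hF => ?_
  have hpre : f ⁻¹' SouslinOp F = SouslinOp fun s => f ⁻¹' F s := by
    simp only [SouslinOp, preimage_iUnion, preimage_iInter]
  rw [mem_ofPred_eq, hpre]
  exact IsRamsey.souslinOp hF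

end Trees

section UltrafilterSums

attribute [local instance] Ultrafilter.addSemigroup

lemma ultrafilter_map_add {M N : Type*} [AddSemigroup M] [AddSemigroup N] (φ : AddHom M N)
    (u v : Ultrafilter M) : (u + v).map φ = u.map φ + v.map φ := by
  refine Ultrafilter.coe_inj.1 (Filter.ext' fun p => ?_)
  simp only [Ultrafilter.coe_map, eventually_map, Ultrafilter.eventually_add, map_add]

lemma continuous_ultrafilter_map {α β : Type*} (f : α → β) :
    Continuous (Ultrafilter.map f) :=
  ultrafilterBasis_is_basis.continuous_iff.2 <| forall_mem_range.2 fun s =>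
    ultrafilter_isOpen_basic (f ⁻¹' s)

lemma exists_isIdempotent_add_add {S : Type*} [AddSemigroup S] [TopologicalSpace S] [T2Space S]
    (hcont : ∀ r : S, Continuous (· + r)) {u : S} (hu : u + u = u) {C : Set S} (hC : IsCompact C)
    (hne : C.Nonempty) (hadd : ∀ x ∈ C, ∀ y ∈ C, x + u + y ∈ C) :
    ∃ x ∈ C, (u + (x + u)) + (u + (x + u)) = u + (x + u) := by
  obtain ⟨_, ⟨x, hx, rfl⟩, hidem⟩ := exists_idempotent_in_compact_add_subsemigroup hcont
    ((· + u) '' C) (hne.image _) (hC.image (hcont u)) <| by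
      rintro _ ⟨x, hx, rfl⟩ _ ⟨y, hy, rfl⟩
      exact ⟨_, hadd x hx y hy, add_assoc _ _ _⟩
  refine ⟨x, hx, ?_⟩
  calc (u + (x + u)) + (u + (x + u)) = u + ((x + (u + u)) + (x + u)) := by simp only [add_assoc]
    _ = u + (x + u) := by rw [hu, hidem]

end UltrafilterSums

lemma exists_forall_ne_apply_eq_zero {M : Type*} [Zero M] {F : ℕ → ℕ → M}
    (hF : ∀ m n, m < n → ∀ z, F m z = 0 ∨ F n z = 0) (z : ℕ) : ∃ n, ∀ n' ≠ n, F n' z = 0 := by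
  by_contra! h
  obtain ⟨m, -, hm⟩ := h 0
  obtain ⟨n, hnm, hn⟩ := h m
  rcases hnm.lt_or_gt with hlt | hlt
  · exact (hF _ _ hlt z).elim hn hm
  · exact (hF _ _ hlt z).elim hm hn

/-- Codes for combinations of the terms of a block sequence: the combination with code `f` uses the
`n`-th term lowered to height `f n`, where height `0` means that the term is absent. Codes are added
by taking pointwise maxima, which for disjoint supports is the usual sum. -/
def HeightFun : Type := ℕ → ℕ

namespace HeightFun

instance : Zero HeightFun := ⟨fun _ => 0⟩

instance : Add HeightFun := ⟨fun f g i => max (f i) (g i)⟩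

instance : AddCommMonoid HeightFun where
  add_assoc _ _ _ := funext fun _ => max_assoc _ _ _
  add_comm _ _ := funext fun _ => max_comm _ _
  zero_add _ := funext fun _ => Nat.zero_max _
  add_zero _ := funext fun _ => Nat.max_zero _
  nsmul := nsmulRec

lemma add_apply (f g : HeightFun) (i : ℕ) : (f + g) i = max (f i) (g i) := rfl

lemma zero_apply (i : ℕ) : (0 : HeightFun) i = 0 := rfl

lemma sum_apply {ι : Type*} (s : Finset ι) (F : ι → HeightFun) (i : ℕ) :
    (∑ l ∈ s, F l) i = s.sup fun l => F l i := by
  classical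
  induction s using Finset.induction_on with
  | empty => rfl
  | insert l s hl ih => rw [Finset.sum_insert hl, add_apply, ih, Finset.sup_insert]

/-- The tetris operation `T ^ j` on codes. -/
def lower (j : ℕ) : HeightFun →+ HeightFun where
  toFun f := fun i => f i - j
  map_zero' := funext fun _ => Nat.zero_sub j
  map_add' f g := funext fun i => Nat.sub_max_sub_right (f i) (g i) j |>.symm

lemma lower_apply (j : ℕ) (f : HeightFun) (i : ℕ) : lower j f i = f i - j := rfl

lemma lower_zero (f : HeightFun) : lower 0 f = f := rfl

lemma lower_lower (a b : ℕ) (f : HeightFun) : lower a (lower b f) = lower (b + a) f :=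
  funext fun _ => Nat.sub_sub _ _ _

/-- The analogue of `FIN_k` for codes. -/
def IsFin (k : ℕ) (f : HeightFun) : Prop :=
  {i | f i ≠ 0}.Finite ∧ (∀ n, f n ≤ k) ∧ ∃ n, f n = k

lemma IsFin.le {k : ℕ} {f : HeightFun} (hf : IsFin k f) (n : ℕ) : f n ≤ k := hf.2.1 n

lemma IsFin.add {a b : ℕ} {f g : HeightFun} (hf : IsFin a f) (hg : IsFin b g) :
    IsFin (max a b) (f + g) := by
  refine ⟨(hf.1.union hg.1).subset fun i hi => ?_, fun n => max_le_max (hf.le n) (hg.le n), ?_⟩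
  · by_contra h
    rw [mem_union, not_or, mem_ofPred_eq, mem_ofPred_eq, not_not, not_not] at h
    exact hi (by rw [add_apply, h.1, h.2, max_self])
  · obtain ⟨⟨m, hm⟩, n, hn⟩ := And.intro hf.2.2 hg.2.2
    rcases le_total a b with hab | hba
    · exact ⟨n, by rw [add_apply, hn, max_eq_right hab, max_eq_right ((hf.le n).trans hab)]⟩
    · exact ⟨m, by rw [add_apply, hm, max_eq_left hba, max_eq_left ((hg.le m).trans hba)]⟩

lemma IsFin.lower_eq_zero {k j : ℕ} {f : HeightFun} (hf : IsFin k f) (hj : k ≤ j) :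
    lower j f = 0 :=
  funext fun i => Nat.sub_eq_zero_of_le ((hf.le i).trans hj)

/-- The block ordering of codes. -/
def BlockLt (f g : HeightFun) : Prop := ∀ m n, f m ≠ 0 → g n ≠ 0 → m < n

/-- Infinite block sequences of codes. -/
def IsBlockSeq (k : ℕ) (q : ℕ → HeightFun) : Prop :=
  (∀ n, IsFin k (q n)) ∧ ∀ m n, m < n → BlockLt (q m) (q n)

section Ultrafilters

attribute [local instance] Ultrafilter.addSemigroup

/-- The cofinite ultrafilters on `FIN_k`, as ultrafilters on all codes. -/
def cofiniteUltrafilters (k : ℕ) : Set (Ultrafilter HeightFun) :=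
  {u | (∀ᶠ f in u, IsFin k f) ∧ ∀ m, ∀ᶠ f : HeightFun in u, ∀ i < m, f i = 0}

lemma isClosed_cofiniteUltrafilters (k : ℕ) : IsClosed (cofiniteUltrafilters k) := by
  have hinter : cofiniteUltrafilters k = {u | {f | IsFin k f} ∈ u} ∩
      ⋂ m, {u : Ultrafilter HeightFun | {f : HeightFun | ∀ i < m, f i = 0} ∈ u} := by
    ext u
    simp only [cofiniteUltrafilters, mem_inter_iff, mem_iInter]
    rfl
  rw [hinter]
  exact (ultrafilter_isClosed_basic _).inter (isClosed_iInter fun _ => ultrafilter_isClosed_basic _)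

lemma add_mem_cofiniteUltrafilters {a b : ℕ} {u v : Ultrafilter HeightFun}
    (hu : u ∈ cofiniteUltrafilters a) (hv : v ∈ cofiniteUltrafilters b) :
    u + v ∈ cofiniteUltrafilters (max a b) := by
  refine ⟨(Ultrafilter.eventually_add _ _ _).2 ?_, fun m => (Ultrafilter.eventually_add _ _ _).2 ?_⟩
  · filter_upwards [hu.1] with f hf
    filter_upwards [hv.1] with g hg using hf.add hg
  · filter_upwards [hu.2 m] with f hf
    filter_upwards [hv.2 m] with g hg i hi
    rw [add_apply, hf i hi, hg i hi, max_self]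

lemma map_lower_add (j : ℕ) (u v : Ultrafilter HeightFun) :
    (u + v).map (lower j) = u.map (lower j) + v.map (lower j) :=
  ultrafilter_map_add (lower j).toAddHom u v

lemma map_lower_lower (a b : ℕ) (u : Ultrafilter HeightFun) :
    (u.map (lower b)).map (lower a) = u.map (lower (b + a)) := by
  rw [Ultrafilter.map_map]
  exact congrArg u.map (funext (lower_lower a b))

/-- A right inverse of `lower 1` which also fills the `m`-th place, so that it maps `0` to a code of
height one. -/
def raise (m : ℕ) (f : HeightFun) : HeightFun := fun i => if f i = 0 ∧ i ≠ m then 0 else f i + 1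

lemma lower_one_raise (m : ℕ) (f : HeightFun) : lower 1 (raise m f) = f := by
  funext i
  simp only [lower_apply, raise]
  grind

lemma IsFin.raise {k : ℕ} {f : HeightFun} (hf : IsFin k f) (m : ℕ) :
    IsFin (k + 1) (raise m f) := by
  obtain ⟨hfin, hle, n, hn⟩ := hf
  refine ⟨(hfin.insert m).subset fun i hi => ?_, fun i => ?_, ?_⟩
  · rw [mem_ofPred_eq, HeightFun.raise] at hi
    rw [mem_insert_iff, mem_ofPred_eq]
    grind
  · have := hle i
    rw [HeightFun.raise]
    grind
  · have := hle m
    rcases eq_or_ne k 0 with rfl | hk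
    · exact ⟨m, by rw [HeightFun.raise]; grind⟩
    · exact ⟨n, by rw [HeightFun.raise]; grind⟩

lemma exists_map_lower_one_eq {k : ℕ} {u : Ultrafilter HeightFun}
    (hu : u ∈ cofiniteUltrafilters k) :
    ∃ v ∈ cofiniteUltrafilters (k + 1), v.map (lower 1) = u := by
  refine ⟨(hyperfilter ℕ).bind fun m => u.map (raise m), ⟨?_, fun N => ?_⟩, ?_⟩
  · change ∀ᶠ m in hyperfilter ℕ, ∀ᶠ f in u, IsFin (k + 1) (raise m f)
    exact Eventually.of_forall fun m => hu.1.mono fun f hf => hf.raise m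
  · have hN : ∀ᶠ m in hyperfilter ℕ, N ≤ m :=
      Nat.hyperfilter_le_atTop (eventually_ge_atTop N)
    change ∀ᶠ m in hyperfilter ℕ, ∀ᶠ f in u, ∀ i < N, raise m f i = 0
    filter_upwards [hN] with m hm
    filter_upwards [hu.2 N] with f hf i hi
    exact if_pos ⟨hf i hi, (hi.trans_le hm).ne⟩
  · refine Ultrafilter.coe_inj.1 (Filter.ext' fun p => ?_)
    change (∀ᶠ m in hyperfilter ℕ, ∀ᶠ f in u, p (lower 1 (raise m f))) ↔ ∀ᶠ f in u, p f
    simp only [lower_one_raise, eventually_const]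

/-- The ultrafilters of Gowers' theorem: `U + T ^ a U = T ^ a U + U = U` for all `a`. -/
structure IsGowersUltrafilter (k : ℕ) (U : Ultrafilter HeightFun) : Prop where
  mem_cofinite : U ∈ cofiniteUltrafilters k
  add_map_lower : ∀ a, U + U.map (lower a) = U
  map_lower_add : ∀ a, U.map (lower a) + U = U

lemma IsGowersUltrafilter.exists_succ {k : ℕ} {u : Ultrafilter HeightFun}
    (hu : IsGowersUltrafilter k u) : ∃ v, IsGowersUltrafilter (k + 1) v := by
  let C : Set (Ultrafilter HeightFun) :=
    cofiniteUltrafilters (k + 1) ∩ Ultrafilter.map (lower 1) ⁻¹' {u}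
  have hidem : u + u = u := hu.add_map_lower 0
  have hCclosed : IsClosed C := (isClosed_cofiniteUltrafilters _).inter
    (isClosed_singleton.preimage (continuous_ultrafilter_map _))
  have hCadd : ∀ x ∈ C, ∀ y ∈ C, x + u + y ∈ C := by
    rintro x ⟨hx, hxu⟩ y ⟨hy, hyu⟩
    rw [mem_preimage, mem_singleton_iff] at hxu hyu
    refine ⟨?_, ?_⟩
    · have := add_mem_cofiniteUltrafilters (add_mem_cofiniteUltrafilters hx hu.mem_cofinite) hy
      rwa [max_eq_left k.le_succ, max_self] at this
    · rw [mem_preimage, HeightFun.map_lower_add, HeightFun.map_lower_add, hxu, hyu,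
        hu.add_map_lower, hidem]
      rfl
  obtain ⟨x, ⟨hx, hxu⟩, hv⟩ := exists_isIdempotent_add_add Ultrafilter.continuous_add_left hidem
    hCclosed.isCompact (exists_map_lower_one_eq hu.mem_cofinite) hCadd
  rw [mem_preimage, mem_singleton_iff] at hxu
  have hlower_one : (u + (x + u)).map (lower 1) = u := by
    rw [HeightFun.map_lower_add, HeightFun.map_lower_add, hxu, hu.add_map_lower, hu.map_lower_add]
  have hlower (a : ℕ) : (u + (x + u)).map (lower (a + 1)) = u.map (lower a) := by
    rw [add_comm a 1, ← map_lower_lower, hlower_one]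
  refine ⟨u + (x + u), ?_, fun a => ?_, fun a => ?_⟩
  · have := add_mem_cofiniteUltrafilters hu.mem_cofinite
      (add_mem_cofiniteUltrafilters hx hu.mem_cofinite)
    rwa [max_eq_left k.le_succ, max_eq_right k.le_succ] at this
  · cases a with
    | zero => exact hv
    | succ a => rw [hlower, add_assoc, add_assoc, hu.add_map_lower]
  · cases a with
    | zero => exact hv
    | succ a => rw [hlower, ← add_assoc, hu.map_lower_add]

theorem exists_isGowersUltrafilter (k : ℕ) : ∃ U, IsGowersUltrafilter k U := by
  induction k with
  | zero =>
    have hlower (a : ℕ) : (pure 0 : Ultrafilter HeightFun).map (lower a) = pure 0 := by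
      rw [Ultrafilter.map_pure, map_zero]
    have hadd : (pure 0 + pure 0 : Ultrafilter HeightFun) = pure 0 := rfl
    have hfin : IsFin 0 0 := ⟨by simp [zero_apply], fun _ => le_rfl, 0, rfl⟩
    exact ⟨pure 0, ⟨hfin, fun m _ _ => rfl⟩, fun a => by rw [hlower, hadd],
      fun a => by rw [hlower, hadd]⟩
  | succ k ih => exact ih.elim fun _ hu => hu.exists_succ

lemma IsGowersUltrafilter.map_lower_add_map_lower {k : ℕ} {U : Ultrafilter HeightFun}
    (hU : IsGowersUltrafilter k U) (a b : ℕ) :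
    U.map (lower a) + U.map (lower b) = U.map (lower (min a b)) := by
  rcases le_total a b with hab | hba
  · obtain ⟨c, rfl⟩ := Nat.exists_eq_add_of_le' hab
    rw [min_eq_left hab, ← map_lower_lower, ← HeightFun.map_lower_add, hU.add_map_lower]
  · obtain ⟨c, rfl⟩ := Nat.exists_eq_add_of_le' hba
    rw [min_eq_right hba, ← map_lower_lower, ← HeightFun.map_lower_add, hU.map_lower_add]

end Ultrafilters

section Fusion

attribute [local instance] Ultrafilter.addSemigroup

variable {k : ℕ} {U : Ultrafilter HeightFun} {q : ℕ → HeightFun}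

/-- A partial sum `w` with maximal height `h` anticipates `B` if typical final summands complete it
to an element of `B` with maximal height `k`. In the fusion this is the promise, kept at every later
step, that the finished combination lies in `B`. -/
def Anticipates (k : ℕ) (U : Ultrafilter HeightFun) (B : Set HeightFun) (h : ℕ)
    (w : HeightFun) : Prop :=
  ∀ b ≤ k, max h b = k → ∀ᶠ p in U, w + lower (k - b) p ∈ B

lemma anticipates_zero {B : Set HeightFun} (hB : B ∈ U) : Anticipates k U B 0 0 := by
  rintro b - hb
  rw [Nat.zero_max] at hb
  filter_upwards [hB] with p hp
  rwa [hb, Nat.sub_self, zero_add, lower_zero]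

lemma Anticipates.mem (hU : IsGowersUltrafilter k U) {B : Set HeightFun} {w : HeightFun}
    (h : Anticipates k U B k w) : w ∈ B := by
  obtain ⟨p, hpB, hp⟩ := ((h 0 k.zero_le (Nat.max_zero k)).and hU.mem_cofinite.1).exists
  rwa [hp.lower_eq_zero (Nat.sub_zero k).ge, add_zero] at hpB

lemma Anticipates.eventually (hU : IsGowersUltrafilter k U) {B : Set HeightFun} {h : ℕ}
    {w : HeightFun} (hw : Anticipates k U B h w) :
    ∀ᶠ p in U, ∀ b ≤ k, Anticipates k U B (max h b) (w + lower (k - b) p) := by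
  refine (eventually_all_finite (finite_Iic k)).2 fun b hb =>
    (eventually_all_finite (finite_Iic k)).2 fun c hc => ?_
  rw [mem_Iic] at hb hc
  by_cases hmax : max (max h b) c = k
  · have hsum : ∀ᶠ p in U.map (lower (k - b)) + U.map (lower (k - c)), w + p ∈ B := by
      have hmin : min (k - b) (k - c) = k - max b c := by omega
      rw [hU.map_lower_add_map_lower, hmin]
      exact hw (max b c) (max_le hb hc) (by rwa [← max_assoc])
    rw [Ultrafilter.eventually_add] at hsum
    have hsum' : ∀ᶠ p in U, ∀ᶠ p' in U, w + (lower (k - b) p + lower (k - c) p') ∈ B := hsum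
    filter_upwards [hsum'] with p hp _
    filter_upwards [hp] with p' hp'
    rwa [add_assoc]
  · exact Eventually.of_forall fun _ h => absurd h hmax

/-- The partial sums of the combinations of the list `l` of codes, taken from its end. -/
def partialSums (k : ℕ) : List HeightFun → Set HeightFun
  | [] => {0}
  | p :: l => image2 (fun w b => w + lower (k - b) p) (partialSums k l) (Iic k)

lemma partialSums_finite (k : ℕ) (l : List HeightFun) : (partialSums k l).Finite := by
  induction l with
  | nil => exact finite_singleton 0
  | cons p l ih => exact ih.image2 _ (finite_Iic k)

lemma sum_mem_partialSums (q : ℕ → HeightFun) {g : HeightFun} (hg : ∀ l, g l ≤ k) (N : ℕ) :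
    ∑ l ∈ Finset.range N, lower (k - g l) (q l) ∈ partialSums k (res q N) := by
  induction N with
  | zero => rfl
  | succ N ih =>
    rw [Finset.sum_range_succ]
    exact mem_image2_of_mem ih (hg N)

/-- The finite sequences that may precede a combination using only terms after `l`. -/
def histories (k : ℕ) (l : List HeightFun) : Set (List HeightFun) :=
  {t | t.length ≤ l.length ∧ ∀ w ∈ t, w ∈ partialSums k l}

lemma histories_finite (k : ℕ) (l : List HeightFun) : (histories k l).Finite := by
  have := (partialSums_finite k l).to_subtype
  refine ((List.finite_length_le (partialSums k l) l.length).image (List.map (↑))).subset ?_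
  rintro t ⟨hlen, ht⟩
  lift t to List (partialSums k l) using ht
  exact ⟨t, by simpa using hlen, rfl⟩

/-- Successors for which every promise made by an earlier partial sum is kept. -/
def fusionTree (k : ℕ) (U : Ultrafilter HeightFun) (A : List HeightFun → Set HeightFun)
    (l : List HeightFun) : Set HeightFun :=
  {p | ∀ t ∈ histories k l, ∀ w ∈ partialSums k l, ∀ h ≤ k, Anticipates k U (A t) h w →
    ∀ b ≤ k, Anticipates k U (A t) (max h b) (w + lower (k - b) p)}

lemma fusionTree_mem (hU : IsGowersUltrafilter k U) (A : List HeightFun → Set HeightFun)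
    (l : List HeightFun) : fusionTree k U A l ∈ U := by
  refine (eventually_all_finite (histories_finite k l)).2 fun t _ =>
    (eventually_all_finite (partialSums_finite k l)).2 fun w _ =>
      (eventually_all_finite (finite_Iic k)).2 fun h _ => ?_
  by_cases hw : Anticipates k U (A t) h w
  · exact (hw.eventually hU).mono fun p hp _ => hp
  · exact Eventually.of_forall fun p hp => absurd hp hw

/-- The combination with code `g` of the codes `q l`. -/
noncomputable def subst (k : ℕ) (q : ℕ → HeightFun) (g : HeightFun) : HeightFun :=
  ∑ᶠ l, lower (k - g l) (q l)

lemma subst_eq_sum (hq : ∀ l, IsFin k (q l)) {g : HeightFun} {N : ℕ} (hg : ∀ l ≥ N, g l = 0) :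
    subst k q g = ∑ l ∈ Finset.range N, lower (k - g l) (q l) := by
  refine finsum_eq_sum_of_support_subset _ fun l hl => ?_
  by_contra hN
  rw [Finset.coe_range, mem_Iio, not_lt] at hN
  exact hl ((hq l).lower_eq_zero (by rw [hg l hN, Nat.sub_zero]))

lemma anticipates_sum_range {A : List HeightFun → Set HeightFun}
    (hA : ∀ t, A t ∈ U) (hq : ∀ l, IsFin k (q l)) (hqA : ∀ l, q l ∈ fusionTree k U A (res q l))
    {g : HeightFun} (hg : ∀ l, g l ≤ k) {M N : ℕ} (hMN : M ≤ N) (hgM : ∀ l < M, g l = 0)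
    {t : List HeightFun} (ht : ∀ N ≥ M, t ∈ histories k (res q N)) :
    Anticipates k U (A t) ((Finset.range N).sup fun l => g l)
      (∑ l ∈ Finset.range N, lower (k - g l) (q l)) := by
  induction N, hMN using Nat.le_induction with
  | base =>
    have hsup : (Finset.range M).sup (fun l => g l) = 0 :=
      (Finset.sup_eq_bot_iff _ _).2 fun l hl => hgM l (Finset.mem_range.1 hl)
    have hsum : ∑ l ∈ Finset.range M, lower (k - g l) (q l) = 0 :=
      Finset.sum_eq_zero fun l hl =>
        (hq l).lower_eq_zero (by rw [hgM l (Finset.mem_range.1 hl), Nat.sub_zero])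
    rw [hsup, hsum]
    exact anticipates_zero (hA t)
  | succ N hMN ih =>
    rw [Finset.sum_range_succ, Finset.range_add_one, Finset.sup_insert, max_comm]
    exact hqA N t (ht N hMN) _ (sum_mem_partialSums q hg N) _ (Finset.sup_le fun l _ => hg l) ih
      _ (hg N)

/-- The first place at which the `m`-th term of `g` is nonzero. -/
noncomputable def blockStart (g : ℕ → HeightFun) (m : ℕ) : ℕ := sInf {l | g m l ≠ 0}

lemma lt_blockStart (hk : 1 ≤ k) {g : ℕ → HeightFun} (hg : IsBlockSeq k g) {i m l : ℕ}
    (him : i < m) (hl : g i l ≠ 0) : l < blockStart g m := by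
  obtain ⟨n, hn⟩ := (hg.1 m).2.2
  have hne : {l | g m l ≠ 0}.Nonempty := ⟨n, by rw [mem_ofPred_eq, hn]; omega⟩
  exact hg.2 i m him _ _ hl (Nat.sInf_mem hne)

lemma blockStart_strictMono (hk : 1 ≤ k) {g : ℕ → HeightFun} (hg : IsBlockSeq k g) :
    StrictMono (blockStart g) := by
  intro i m him
  obtain ⟨n, hn⟩ := (hg.1 i).2.2
  have hn0 : g i n ≠ 0 := by omega
  exact (Nat.sInf_le hn0).trans_lt (lt_blockStart hk hg him hn0)

lemma subst_mem_treeBox_of_fusionTree (hk : 1 ≤ k) (hU : IsGowersUltrafilter k U)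
    {A : List HeightFun → Set HeightFun} (hA : ∀ t, A t ∈ U) (hq : ∀ l, IsFin k (q l))
    (hqA : ∀ l, q l ∈ fusionTree k U A (res q l)) {g : ℕ → HeightFun} (hg : IsBlockSeq k g) :
    (fun m => subst k q (g m)) ∈ treeBox [] A := by
  have hsubst {i m N : ℕ} (him : i < m) (hN : blockStart g m ≤ N) :
      subst k q (g i) = ∑ l ∈ Finset.range N, lower (k - g i l) (q l) :=
    subst_eq_sum hq fun l hl => by
      by_contra h
      exact (lt_blockStart hk hg him h).not_ge (hN.trans hl)
  refine ⟨rfl, fun m _ => ?_⟩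
  have hbefore : ∀ l < blockStart g m, g m l = 0 := fun l hl => not_not.1 (Nat.notMem_of_lt_sInf hl)
  have hhist : ∀ N ≥ blockStart g m,
      res (fun m => subst k q (g m)) m ∈ histories k (res q N) := fun N hN => by
    refine ⟨?_, fun w hw => ?_⟩
    · rw [res_length, res_length]
      exact ((blockStart_strictMono hk hg).le_apply).trans hN
    · obtain ⟨i, him, rfl⟩ := mem_res.1 hw
      rw [hsubst him hN]
      exact sum_mem_partialSums q (hg.1 i).le N
  have hant := anticipates_sum_range hA hq hqA (hg.1 m).le
    ((blockStart_strictMono hk hg) m.lt_succ_self).le hbefore hhist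
  have hsup : (Finset.range (blockStart g (m + 1))).sup (fun l => g m l) = k := by
    refine le_antisymm (Finset.sup_le fun l _ => (hg.1 m).le l) ?_
    obtain ⟨n, hn⟩ := (hg.1 m).2.2
    exact hn.ge.trans (Finset.le_sup (Finset.mem_range.2
      (lt_blockStart hk hg m.lt_succ_self (by omega))))
  rw [hsup, ← hsubst m.lt_succ_self le_rfl] at hant
  exact hant.mem hU

theorem eventually_forall_subst_mem (hk : 1 ≤ k) (hU : IsGowersUltrafilter k U)
    {X : Set (ℕ → HeightFun)} (hX : X ∈ branchFilter U []) :
    ∀ᶠ q in branchFilter U [], (∀ l, IsFin k (q l)) → ∀ g, IsBlockSeq k g →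
      (fun m => subst k q (g m)) ∈ X := by
  obtain ⟨A, hA, hAX⟩ := hX
  filter_upwards [treeBox_mem_branchFilter (fusionTree_mem hU A) []] with q hq hqfin g hg
  exact hAX (subst_mem_treeBox_of_fusionTree hk hU hA hqfin (fun l => hq.2 l l.zero_le) hg)

lemma IsGowersUltrafilter.eventually_isBlockSeq (hU : IsGowersUltrafilter k U) :
    ∀ᶠ q in branchFilter U [], IsBlockSeq k q := by
  have hlt {f : HeightFun} (hf : IsFin k f) : ∀ᶠ p in U, BlockLt f p := by
    obtain ⟨m, hm⟩ := hf.1.bddAbove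
    filter_upwards [hU.mem_cofinite.2 (m + 1)] with p hp i j hi hj
    by_contra! hji
    exact hj (hp j (Nat.lt_succ_of_le (hji.trans (hm hi))))
  have hA (l : List HeightFun) :
      {p | IsFin k p ∧ ∀ f ∈ {f | f ∈ l ∧ IsFin k f}, BlockLt f p} ∈ U :=
    hU.mem_cofinite.1.and <| (eventually_all_finite
      (l.finite_toSet.subset fun _ hf => hf.1)).2 fun f hf => hlt hf.2
  filter_upwards [treeBox_mem_branchFilter hA []] with q hq
  have hfin (n : ℕ) : IsFin k (q n) := (hq.2 n n.zero_le).1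
  exact ⟨hfin, fun m n hmn => (hq.2 n n.zero_le).2 _ ⟨mem_res.2 ⟨m, hmn, rfl⟩, hfin m⟩⟩

end Fusion

lemma IsBlockSeq.exists_forall_ne_eq_zero {k : ℕ} {q : ℕ → HeightFun} (hq : IsBlockSeq k q)
    (i : ℕ) : ∃ l, ∀ l' ≠ l, q l' i = 0 :=
  exists_forall_ne_apply_eq_zero (fun m n hmn z => by
    by_contra! h
    exact (hq.2 m n hmn z z h.1 h.2).false) i

lemma subst_apply {k : ℕ} {q : ℕ → HeightFun} (hq : ∀ l, IsFin k (q l)) {g : HeightFun}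
    (hg : {l | g l ≠ 0}.Finite) {i l : ℕ} (hl : ∀ l' ≠ l, q l' i = 0) :
    subst k q g i = q l i - (k - g l) := by
  obtain ⟨N, hN⟩ := hg.bddAbove
  have hgN : ∀ n ≥ max (N + 1) (l + 1), g n = 0 := fun n hn => by
    by_contra h
    have := hN h
    omega
  rw [subst_eq_sum hq hgN, sum_apply]
  refine le_antisymm (Finset.sup_le fun l' _ => ?_)
    (Finset.le_sup (f := fun l => lower (k - g l) (q l) i) (by simp))
  rcases eq_or_ne l' l with rfl | hne
  · rfl
  · rw [lower_apply, hl l' hne, Nat.zero_sub]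
    exact Nat.zero_le _

end HeightFun

section Shrink

/-- Move `z` by `j` towards zero, stopping there: the effect of `T ^ j` on a coordinate. -/
def shrink (j : ℕ) (z : ℤ) : ℤ := max (z - j) 0 + min (z + j) 0

lemma shrink_zero_left (z : ℤ) : shrink 0 z = z := by
  rw [shrink]; omega

lemma shrink_zero_right (j : ℕ) : shrink j 0 = 0 := by
  rw [shrink]; omega

lemma shrink_shrink (i j : ℕ) (z : ℤ) : shrink i (shrink j z) = shrink (j + i) z := by
  simp only [shrink]; omega

lemma shrink_neg (j : ℕ) (z : ℤ) : shrink j (-z) = -shrink j z := by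
  simp only [shrink]; omega

lemma abs_shrink (j : ℕ) (z : ℤ) : |shrink j z| = max (|z| - j) 0 := by
  rw [shrink, abs_eq_max_neg, abs_eq_max_neg]; omega

lemma abs_shrink_sub_shrink_le {i j : ℕ} (hij : i ≤ j + 1) (hji : j ≤ i + 1) (z : ℤ) :
    |shrink i z - shrink j z| ≤ 1 := by
  rw [shrink, shrink, abs_eq_max_neg]; omega

lemma shrink_eq_zero {j : ℕ} {z : ℤ} (h : |z| ≤ j) : shrink j z = 0 := by
  rw [abs_eq_max_neg] at h
  rw [shrink]; omega

lemma shrink_sign_mul {ε : ℤ} (hε : ε = 1 ∨ ε = -1) (j : ℕ) (z : ℤ) :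
    shrink j (ε * z) = ε * shrink j z := by
  rcases hε with rfl | rfl
  · rw [one_mul, one_mul]
  · rw [neg_one_mul, neg_one_mul, shrink_neg]

lemma shrink_sub_sub {k f d : ℕ} {z : ℤ} (hf : f ≤ k) (hz : |z| ≤ k) :
    (-1) ^ (k - (f - d)) * shrink (k - (f - d)) z = (-1) ^ (k - f + d) * shrink (k - f + d) z := by
  rcases le_total d f with hdf | hfd
  · rw [show k - (f - d) = k - f + d by omega]
  · rw [shrink_eq_zero (by omega), shrink_eq_zero (by omega), mul_zero, mul_zero]

lemma tetris_iterate_apply (j : ℕ) (p : ℕ → ℤ) (n : ℕ) : tetris^[j] p n = shrink j (p n) := by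
  induction j with
  | zero => exact (shrink_zero_left _).symm
  | succ j ih =>
    rw [iterate_succ_apply', tetris, ih, ← shrink_shrink]
    generalize shrink j (p n) = z
    rw [shrink]
    grind

end Shrink

lemma IsBlockSeq.exists_forall_ne_eq_zero {k : ℕ} {P : ℕ → ℕ → ℤ} (hP : IsBlockSeq k P) (z : ℕ) :
    ∃ n, ∀ n' ≠ n, P n' z = 0 :=
  exists_forall_ne_apply_eq_zero (fun m n hmn z => by
    by_contra! h
    exact (hP.2 m n hmn z z h.1 h.2).false) z

lemma IsBlockSeq.exists_peak {k : ℕ} {P : ℕ → ℕ → ℤ} (hP : IsBlockSeq k P) (n : ℕ) :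
    ∃ z, |P n z| = k ∧ ∀ n' ≠ n, P n' z = 0 := by
  obtain ⟨z, hz⟩ := (hP.1 n).2.2
  refine ⟨z, hz, fun n' hn' => ?_⟩
  by_contra h
  have hnz : P n z ≠ 0 := by
    have := (hP.1 n').2.1 z
    have := abs_pos.2 h
    exact abs_pos.1 (by omega)
  rcases hn'.lt_or_gt with hlt | hlt
  · exact (hP.2 _ _ hlt z z h hnz).false
  · exact (hP.2 _ _ hlt z z hnz h).false

section Combinations

variable {k : ℕ} {P : ℕ → ℕ → ℤ} {ε : ℕ → ℤ} {f g : HeightFun}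

/-- The combination of the terms of `P` with code `f` and signs `ε`. -/
noncomputable def signedComb (k : ℕ) (P : ℕ → ℕ → ℤ) (ε : ℕ → ℤ) (f : HeightFun) : ℕ → ℤ :=
  ∑ᶠ n, ε n • tetris^[k - f n] (P n)

lemma support_signedComb_subset (hP : ∀ n, IsFin k (P n)) (ε : ℕ → ℤ) (f : HeightFun) :
    (support fun n => ε n • tetris^[k - f n] (P n)) ⊆ {n | f n ≠ 0} := by
  refine fun n hn hfn => hn (funext fun z => ?_)
  change (ε n • tetris^[k - f n] (P n)) z = 0
  rw [Pi.smul_apply, tetris_iterate_apply, show f n = 0 from hfn, Nat.sub_zero,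
    shrink_eq_zero ((hP n).2.1 z), smul_zero]

lemma signedComb_apply (hP : ∀ n, IsFin k (P n)) (hf : {n | f n ≠ 0}.Finite) {n z : ℕ}
    (hn : ∀ n' ≠ n, P n' z = 0) :
    signedComb k P ε f z = ε n * shrink (k - f n) (P n z) := by
  rw [signedComb, finsum_apply (hf.subset (support_signedComb_subset hP ε f)), finsum_eq_single _ n]
  · rw [Pi.smul_apply, tetris_iterate_apply, smul_eq_mul]
  · intro n' hn'
    rw [Pi.smul_apply, tetris_iterate_apply, hn n' hn', shrink_zero_right, smul_zero]

lemma inSpanPM_signedComb (hk : 1 ≤ k) (hP : ∀ n, IsFin k (P n))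
    (hε : ∀ n, ε n = 1 ∨ ε n = -1) (hf : HeightFun.IsFin k f) :
    InSpanPM k P (signedComb k P ε f) := by
  let s := hf.1.toFinset
  have hs {n : ℕ} : n ∈ s ↔ f n ≠ 0 := hf.1.mem_toFinset
  obtain ⟨N, hN⟩ := hf.2.2
  have hNs : N ∈ s := hs.2 (by omega)
  obtain ⟨m, hm⟩ : ∃ m, s.card = m + 1 :=
    Nat.exists_eq_succ_of_ne_zero (Finset.card_ne_zero_of_mem hNs)
  let e := s.orderEmbOfFin hm
  obtain ⟨i, hi⟩ : N ∈ range e := by rwa [Finset.range_orderEmbOfFin]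
  refine ⟨m, e, fun i => ε (e i), fun i => k - f (e i), e.strictMono, fun i => hε _, fun i => ?_,
    ⟨i, by beta_reduce; rw [hi, hN, Nat.sub_self]⟩, ?_⟩
  · have := hs.1 (s.orderEmbOfFin_mem hm i)
    exact Nat.sub_lt hk (Nat.pos_of_ne_zero this)
  · rw [signedComb, finsum_eq_sum_of_support_subset (s := s) _ fun n hn =>
      hs.2 (support_signedComb_subset hP ε f hn), ← s.map_orderEmbOfFin_univ hm, Finset.sum_map]
    rfl

lemma InSpanPM.exists_eq_signedComb {q : ℕ → ℤ} (hP : ∀ n, IsFin k (P n))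
    (hq : InSpanPM k P q) : ∃ (ε : ℕ → ℤ) (f : HeightFun), (∀ n, ε n = 1 ∨ ε n = -1) ∧
      HeightFun.IsFin k f ∧ q = signedComb k P ε f := by
  obtain ⟨m, n, ε, j, hn, hε, hj, ⟨i₀, hi₀⟩, rfl⟩ := hq
  let f : HeightFun := extend n (fun i => k - j i) 0
  let ε' : ℕ → ℤ := extend n ε 1
  have hfn (i) : f (n i) = k - j i := hn.injective.extend_apply _ _ i
  have hεn (i) : ε' (n i) = ε i := hn.injective.extend_apply _ _ i
  have hf0 {l : ℕ} (hl : l ∉ range n) : f l = 0 := extend_apply' _ _ _ hl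
  have hfsupp : {l | f l ≠ 0} ⊆ range n := fun l hl => by
    by_contra h
    exact hl (hf0 h)
  refine ⟨ε', f, fun l => ?_, ⟨(finite_range n).subset hfsupp, fun l => ?_, n i₀, ?_⟩, ?_⟩
  · by_cases hl : l ∈ range n
    · obtain ⟨i, rfl⟩ := hl
      rw [hεn]
      exact hε i
    · exact .inl (extend_apply' _ _ _ hl)
  · by_cases hl : l ∈ range n
    · obtain ⟨i, rfl⟩ := hl
      rw [hfn]
      exact Nat.sub_le _ _
    · rw [hf0 hl]
      exact k.zero_le
  · rw [hfn, hi₀, Nat.sub_zero]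
  · rw [signedComb, finsum_eq_sum_of_support_subset (s := Finset.univ.map ⟨n, hn.injective⟩) _
      fun l hl => ?_, Finset.sum_map]
    · refine Finset.sum_congr rfl fun i _ => ?_
      rw [Embedding.coeFn_mk, hεn, hfn, Nat.sub_sub_self (hj i).le]
    · simpa using hfsupp (support_signedComb_subset hP _ _ hl)

lemma exists_ne_zero_of_signedComb_ne_zero (hP : IsBlockSeq k P) (hf : {n | f n ≠ 0}.Finite)
    {z : ℕ} (hz : signedComb k P ε f z ≠ 0) : ∃ n, f n ≠ 0 ∧ P n z ≠ 0 := by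
  obtain ⟨n, hn⟩ := hP.exists_forall_ne_eq_zero z
  rw [signedComb_apply hP.1 hf hn] at hz
  refine ⟨n, fun h => hz ?_, fun h => hz ?_⟩
  · rw [h, Nat.sub_zero, shrink_eq_zero ((hP.1 n).2.1 z), mul_zero]
  · rw [h, shrink_zero_right, mul_zero]

lemma abs_signedComb_apply (hP : ∀ n, IsFin k (P n)) (hε : ∀ n, ε n = 1 ∨ ε n = -1)
    (hf : {n | f n ≠ 0}.Finite) {n z : ℕ} (hn : ∀ n' ≠ n, P n' z = 0) :
    |signedComb k P ε f z| = max (|P n z| - (k - f n : ℕ)) 0 := by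
  rw [signedComb_apply hP hf hn, abs_mul, abs_shrink]
  rcases hε n with h | h <;> simp only [h, abs_one, abs_neg, one_mul]

lemma isFin_signedComb (hP : IsBlockSeq k P) (hε : ∀ n, ε n = 1 ∨ ε n = -1)
    (hf : HeightFun.IsFin k f) : IsFin k (signedComb k P ε f) := by
  refine ⟨(hf.1.biUnion fun n _ => (hP.1 n).1).subset fun z hz => ?_, fun z => ?_, ?_⟩
  · obtain ⟨n, hfn, hPn⟩ := exists_ne_zero_of_signedComb_ne_zero hP hf.1 hz
    exact mem_biUnion (show n ∈ {n | f n ≠ 0} from hfn) hPn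
  · obtain ⟨n, hn⟩ := hP.exists_forall_ne_eq_zero z
    have := (hP.1 n).2.1 z
    rw [abs_signedComb_apply hP.1 hε hf.1 hn]
    omega
  · obtain ⟨n, hn⟩ := hf.2.2
    obtain ⟨z, hz, hnz⟩ := hP.exists_peak n
    refine ⟨z, ?_⟩
    rw [abs_signedComb_apply hP.1 hε hf.1 hnz]
    omega

lemma blockLt_signedComb (hP : IsBlockSeq k P) {δ : ℕ → ℤ} (hf : {n | f n ≠ 0}.Finite)
    (hg : {n | g n ≠ 0}.Finite) (hfg : HeightFun.BlockLt f g) :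
    BlockLt (signedComb k P ε f) (signedComb k P δ g) := by
  intro x y hx hy
  obtain ⟨m, hfm, hPm⟩ := exists_ne_zero_of_signedComb_ne_zero hP hf hx
  obtain ⟨n, hgn, hPn⟩ := exists_ne_zero_of_signedComb_ne_zero hP hg hy
  exact hP.2 m n (hfg m n hfm hgn) x y hPm hPn

lemma blockLt_of_blockLt_signedComb (hP : IsBlockSeq k P) {δ : ℕ → ℤ}
    (hε : ∀ n, ε n = 1 ∨ ε n = -1) (hδ : ∀ n, δ n = 1 ∨ δ n = -1) (hf : HeightFun.IsFin k f)
    (hg : HeightFun.IsFin k g) (h : BlockLt (signedComb k P ε f) (signedComb k P δ g)) :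
    HeightFun.BlockLt f g := by
  choose z hzk hz using hP.exists_peak
  have hne {ε : ℕ → ℤ} (hε : ∀ n, ε n = 1 ∨ ε n = -1) {f : HeightFun} (hf : HeightFun.IsFin k f)
      {n : ℕ} (hn : f n ≠ 0) : signedComb k P ε f (z n) ≠ 0 := by
    have := hf.le n
    rw [← abs_pos, abs_signedComb_apply hP.1 hε hf.1 (hz n), hzk]
    omega
  intro m n hm hn
  have hlt := h _ _ (hne hε hf hm) (hne hδ hg hn)
  by_contra! hnm
  rcases hnm.lt_or_eq with hnm | rfl
  · have hPz (n : ℕ) (hn : k ≠ 0) : P n (z n) ≠ 0 := abs_pos.1 (by have := hzk n; omega)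
    have hk : k ≠ 0 := fun hk => hm (Nat.le_zero.1 (hk ▸ hf.le m))
    exact hlt.asymm (hP.2 n m hnm _ _ (hPz n hk) (hPz m hk))
  · exact hlt.false

/-- The combination of the terms of `P` with code `f`, formed with `-T` in place of `T`. -/
noncomputable def altComb (k : ℕ) (P : ℕ → ℕ → ℤ) (f : HeightFun) : ℕ → ℤ :=
  signedComb k P (fun n => (-1) ^ (k - f n)) f

lemma altComb_apply (hP : ∀ n, IsFin k (P n)) (hf : {n | f n ≠ 0}.Finite) {n z : ℕ}
    (hn : ∀ n' ≠ n, P n' z = 0) :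
    altComb k P f z = (-1) ^ (k - f n) * shrink (k - f n) (P n z) :=
  signedComb_apply hP hf hn

lemma isBlockSeq_altComb (hP : IsBlockSeq k P) {q : ℕ → HeightFun}
    (hq : HeightFun.IsBlockSeq k q) : IsBlockSeq k fun n => altComb k P (q n) :=
  ⟨fun n => isFin_signedComb hP (fun _ => neg_one_pow_eq_or ℤ _) (hq.1 n),
    fun m n hmn => blockLt_signedComb hP (hq.1 m).1 (hq.1 n).1 (hq.2 m n hmn)⟩

lemma altComb_apply_eq_zero (hP : ∀ n, IsFin k (P n)) (hf : {n | f n ≠ 0}.Finite) {n z : ℕ}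
    (hn : ∀ n' ≠ n, P n' z = 0) (hfn : f n = 0) : altComb k P f z = 0 := by
  rw [altComb_apply hP hf hn, hfn, Nat.sub_zero, shrink_eq_zero ((hP n).2.1 z), mul_zero]

lemma altComb_subst (hP : IsBlockSeq k P) {q : ℕ → HeightFun} (hq : HeightFun.IsBlockSeq k q)
    (hf : HeightFun.IsFin k f) (hs : {n | HeightFun.subst k q f n ≠ 0}.Finite) :
    altComb k P (HeightFun.subst k q f) = altComb k (fun n => altComb k P (q n)) f := by
  funext z
  obtain ⟨n, hn⟩ := hP.exists_forall_ne_eq_zero z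
  obtain ⟨l, hl⟩ := hq.exists_forall_ne_eq_zero n
  have hlz : ∀ l' ≠ l, altComb k P (q l') z = 0 := fun l' hl' =>
    altComb_apply_eq_zero hP.1 (hq.1 l').1 hn (hl l' hl')
  rw [altComb_apply hP.1 hs hn, HeightFun.subst_apply hq.1 hf.1 hl,
    shrink_sub_sub ((hq.1 l).le n) ((hP.1 n).2.1 z),
    altComb_apply (isBlockSeq_altComb hP hq).1 hf.1 hlz, altComb_apply hP.1 (hq.1 l).1 hn,
    shrink_sign_mul (neg_one_pow_eq_or ℤ _), shrink_shrink, pow_add]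
  ring

/-- The block sequence of the `-T`-combinations of `P` with codes `q n`. -/
noncomputable def altSeq (P : BlockSeq k) (q : {q // HeightFun.IsBlockSeq k q}) : BlockSeq k :=
  ⟨fun n => altComb k P.1 (q.1 n), isBlockSeq_altComb P.2 q.2⟩

end Combinations

section Colourings

instance : TopologicalSpace HeightFun := ⊥

instance : DiscreteTopology HeightFun := ⟨rfl⟩

variable {k : ℕ}

lemma isClosed_setOf_isBlockSeq (k : ℕ) : IsClosed {q | HeightFun.IsBlockSeq k q} := by
  have h (n : ℕ) (B : Set HeightFun) : IsClosed {q : ℕ → HeightFun | q n ∈ B} :=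
    (isClosed_discrete B).preimage (continuous_apply n)
  have h₂ (m n : ℕ) (B : Set (HeightFun × HeightFun)) :
      IsClosed {q : ℕ → HeightFun | (q m, q n) ∈ B} :=
    (isClosed_discrete B).preimage ((continuous_apply m).prodMk (continuous_apply n))
  simp only [HeightFun.IsBlockSeq, ofPred_and, ofPred_forall]
  exact (isClosed_iInter fun n => h n {f | HeightFun.IsFin k f}).inter
    (isClosed_iInter fun m => isClosed_iInter fun n => isClosed_iInter fun _ =>
      h₂ m n {p | HeightFun.BlockLt p.1 p.2})

lemma continuous_altSeq (P : BlockSeq k) : Continuous (altSeq P) := by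
  refine continuous_generateFrom_iff.2 ?_
  rintro _ ⟨s, rfl⟩
  have hterm (n : ℕ) (B : Set HeightFun) :
      IsOpen {q : {q // HeightFun.IsBlockSeq k q} | q.1 n ∈ B} :=
    (isOpen_discrete B).preimage ((continuous_apply n).comp continuous_subtype_val)
  simp only [ofPred_forall, preimage_iInter]
  exact isOpen_iInter_of_finite fun i => hterm i {f | altComb k P.1 f = s.get i}

theorem exists_forall_altSeq_altSeq_eq (hk : 1 ≤ k) {ι : Type*} [Finite ι] {c : BlockSeq k → ι}
    (hc : ∀ i, SouslinMeasurable (c ⁻¹' {i})) (P : BlockSeq k) :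
    ∃ i q, ∀ g, c (altSeq (altSeq P q) g) = i ∧
      ∀ m, InSpanPM k P.1 ((altSeq (altSeq P q) g).1 m) := by
  obtain ⟨U, hU⟩ := HeightFun.exists_isGowersUltrafilter k
  obtain ⟨ρ, hρ, -, hρcont⟩ := exists_retraction_subtype_of_isClosed (isClosed_setOf_isBlockSeq k)
    hU.eventually_isBlockSeq.exists
  obtain ⟨i, hi⟩ := exists_preimage_mem_branchFilter_nil (c := c ∘ altSeq P ∘ ρ) fun i =>
    (hc i).isRamsey_preimage ((continuous_altSeq P).comp hρcont) U
  obtain ⟨q, hq, hqX⟩ := (hU.eventually_isBlockSeq.and <|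
    HeightFun.eventually_forall_subst_mem hk hU (inter_mem hi hU.eventually_isBlockSeq)).exists
  refine ⟨i, ⟨q, hq⟩, fun g => ?_⟩
  obtain ⟨hci, hs⟩ := hqX hq.1 g.1 g.2
  have heq : altSeq (altSeq P ⟨q, hq⟩) g = altSeq P ⟨_, hs⟩ :=
    Subtype.ext <| funext fun m => (altComb_subst P.2 hq (g.2.1 m) (hs.1 m).1).symm
  rw [heq]
  refine ⟨?_, fun m => inSpanPM_signedComb hk P.2.1 (fun _ => neg_one_pow_eq_or ℤ _) (hs.1 m)⟩
  rw [← hρ ⟨_, hs⟩]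
  exact hci

end Colourings

section Pairing

variable {k : ℕ}

/-- The codes of `p₀ - T p₁, p₂ - T p₃, …`, as combinations with `-T`. Having both signs in each
term lets `matchCode` absorb an arbitrary sign. -/
def pairCode (k m : ℕ) : HeightFun := fun l =>
  if l = 2 * m then k else if l = 2 * m + 1 then k - 1 else 0

lemma pairCode_ne_zero {m l : ℕ} (h : pairCode k m l ≠ 0) : l / 2 = m := by
  rw [pairCode] at h
  grind

lemma isBlockSeq_pairCode (k : ℕ) : HeightFun.IsBlockSeq k (pairCode k) := by
  refine ⟨fun m => ⟨(finite_Iic (2 * m + 1)).subset fun l hl => ?_, fun l => ?_, 2 * m, if_pos rfl⟩,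
    fun m n hmn i j hi hj => ?_⟩
  · have := pairCode_ne_zero hl
    rw [mem_Iic]
    omega
  · rw [pairCode]
    split_ifs <;> omega
  · have := pairCode_ne_zero hi
    have := pairCode_ne_zero hj
    omega

lemma altComb_pairCode_apply {P : ℕ → ℕ → ℤ} (hk : 1 ≤ k) (hP : ∀ n, IsFin k (P n)) {l z : ℕ}
    (hl : ∀ l' ≠ l, P l' z = 0) :
    altComb k P (pairCode k (l / 2)) z = (-1) ^ (l % 2) * shrink (l % 2) (P l z) := by
  have hcode : k - pairCode k (l / 2) l = l % 2 := by
    rw [pairCode]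
    grind
  rw [altComb_apply hP ((isBlockSeq_pairCode k).1 _).1 hl, hcode]

lemma signedComb_altComb_pairCode_apply {P : ℕ → ℕ → ℤ} {ε : ℕ → ℤ} {f : HeightFun} (hk : 1 ≤ k)
    (hP : IsBlockSeq k P) (hf : HeightFun.IsFin k f) {l z : ℕ} (hl : ∀ l' ≠ l, P l' z = 0) :
    signedComb k (fun m => altComb k P (pairCode k m)) ε f z =
      ε (l / 2) * (-1) ^ (l % 2) * shrink (l % 2 + (k - f (l / 2))) (P l z) := by
  have hpair := isBlockSeq_pairCode k
  have hother : ∀ m ≠ l / 2, altComb k P (pairCode k m) z = 0 := fun m hm =>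
    altComb_apply_eq_zero hP.1 (hpair.1 m).1 hl <| by
      by_contra h
      exact hm (pairCode_ne_zero h).symm
  rw [signedComb_apply (isBlockSeq_altComb hP hpair).1 hf.1 hother,
    altComb_pairCode_apply hk hP.1 hl, shrink_sign_mul (neg_one_pow_eq_or ℤ _), shrink_shrink,
    mul_assoc]

/-- A code whose `-T`-combination has, at each place, the sign of the combination of the sequence
`pairCode` with code `f` and signs `ε`: a height is lowered by one where the sign would differ. -/
def matchCode (k : ℕ) (ε : ℕ → ℤ) (f : HeightFun) : HeightFun := fun l =>
  f (l / 2) - if (-1) ^ (k - f (l / 2)) = ε (l / 2) * (-1) ^ (l % 2) then 0 else 1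

lemma ne_zero_of_matchCode_ne_zero {ε : ℕ → ℤ} {f : HeightFun} {l : ℕ}
    (h : matchCode k ε f l ≠ 0) : f (l / 2) ≠ 0 := by
  rw [matchCode] at h
  omega

lemma blockLt_matchCode {ε δ : ℕ → ℤ} {f g : HeightFun} (h : HeightFun.BlockLt f g) :
    HeightFun.BlockLt (matchCode k ε f) (matchCode k δ g) := by
  intro m n hm hn
  have := h _ _ (ne_zero_of_matchCode_ne_zero hm) (ne_zero_of_matchCode_ne_zero hn)
  omega

lemma isFin_matchCode {ε : ℕ → ℤ} {f : HeightFun} (hε : ∀ n, ε n = 1 ∨ ε n = -1)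
    (hf : HeightFun.IsFin k f) : HeightFun.IsFin k (matchCode k ε f) := by
  obtain ⟨N, hN⟩ := hf.1.bddAbove
  refine ⟨(finite_Iic (2 * N + 1)).subset fun l hl => ?_, fun l => (Nat.sub_le _ _).trans (hf.le _),
    ?_⟩
  · have := hN (ne_zero_of_matchCode_ne_zero hl)
    rw [mem_Iic]
    omega
  · obtain ⟨n, hn⟩ := hf.2.2
    rcases hε n with h | h
    · exact ⟨2 * n, by simp [matchCode, hn, h]⟩
    · exact ⟨2 * n + 1, by simp [matchCode, hn, h, Nat.add_mod, Nat.mul_add_div]⟩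

lemma normLe_signedComb_sub_altComb_matchCode {P : ℕ → ℕ → ℤ} {ε : ℕ → ℤ} {f : HeightFun}
    (hk : 1 ≤ k) (hP : IsBlockSeq k P) (hε : ∀ n, ε n = 1 ∨ ε n = -1) (hf : HeightFun.IsFin k f) :
    normLe (signedComb k (fun m => altComb k P (pairCode k m)) ε f -
      altComb k P (matchCode k ε f)) 1 := by
  intro z
  obtain ⟨l, hl⟩ := hP.exists_forall_ne_eq_zero z
  rw [Pi.sub_apply, signedComb_altComb_pairCode_apply hk hP hf hl,
    altComb_apply hP.1 (isFin_matchCode hε hf).1 hl, matchCode,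
    shrink_sub_sub (hf.le _) ((hP.1 l).2.1 z)]
  set e := if (-1) ^ (k - f (l / 2)) = ε (l / 2) * (-1) ^ (l % 2) then 0 else 1 with he
  have hsign : (-1) ^ (k - f (l / 2) + e) = ε (l / 2) * (-1) ^ (l % 2) := by
    rw [pow_add]
    rcases neg_one_pow_eq_or ℤ (k - f (l / 2)) with h | h <;>
    rcases neg_one_pow_eq_or ℤ (l % 2) with h' | h' <;>
    rcases hε (l / 2) with h'' | h'' <;> simp [he, h, h', h'']
  have he1 : e ≤ 1 := by
    rw [he]
    split_ifs <;> omega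
  rw [← hsign, ← mul_sub, abs_mul, abs_neg_one_pow, one_mul]
  exact abs_shrink_sub_shrink_le (by omega) (by omega) _

/-- The block sequence with codes `pairCode k`. -/
noncomputable def pairSeq (P : BlockSeq k) : BlockSeq k :=
  altSeq P ⟨pairCode k, isBlockSeq_pairCode k⟩

theorem exists_normLe_sub_altSeq (hk : 1 ≤ k) (P : BlockSeq k) {R : BlockSeq k}
    (hR : ∀ n, InSpanPM k (pairSeq P).1 (R.1 n)) :
    ∃ g, ∀ n, normLe (R.1 n - (altSeq P g).1 n) 1 := by
  choose ε f hε hf hRf using fun n => (hR n).exists_eq_signedComb (pairSeq P).2.1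
  have hlt (m n : ℕ) (hmn : m < n) : HeightFun.BlockLt (f m) (f n) :=
    blockLt_of_blockLt_signedComb (pairSeq P).2 (hε m) (hε n) (hf m) (hf n) <| by
      rw [← hRf, ← hRf]
      exact R.2.2 m n hmn
  refine ⟨⟨fun n => matchCode k (ε n) (f n), fun n => isFin_matchCode (hε n) (hf n),
    fun m n hmn => blockLt_matchCode (hlt m n hmn)⟩, fun n => ?_⟩
  rw [hRf]
  exact normLe_signedComb_sub_altComb_matchCode hk P.2 (hε n) (hf n)

end Pairing

/-- relativized main theorem: for every `k, r ≥ 1`, every infinite block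
sequence `P` in `FIN_{±k}` and every Souslin measurable colouring `c : FIN_{±k}^[∞] → r`
there are `i < r` and `Q ≤ P` with `⟨Q⟩_{±k}^[∞] ⊆ (c⁻¹{i})₁`. -/
theorem gowers_infinite_dimensional_relativized (k r : ℕ) (hk : 1 ≤ k) (hr : 1 ≤ r)
    (P : BlockSeq k) (c : BlockSeq k → Fin r)
    (hc : ∀ i : Fin r, SouslinMeasurable (c ⁻¹' {i})) :
    ∃ (i : Fin r) (Q : BlockSeq k), (∀ n, InSpanPM k P.1 (Q.1 n)) ∧
      ∀ R : BlockSeq k, (∀ n, InSpanPM k Q.1 (R.1 n)) →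
        ∃ R' : BlockSeq k, c R' = i ∧ ∀ n, normLe (R.1 n - R'.1 n) 1 := by
  obtain ⟨i, q, hq⟩ := exists_forall_altSeq_altSeq_eq hk hc P
  refine ⟨i, pairSeq (altSeq P q), (hq _).2, fun R hR => ?_⟩
  obtain ⟨g, hg⟩ := exists_normLe_sub_altSeq hk (altSeq P q) hR
  exact ⟨altSeq (altSeq P q) g, (hq g).1, hg⟩
end
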